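/- If a dynamical system (X,T) satisfies the specification property, then it is saturated; that is, for every T-invariant Borel probability measure μ on X, the Bowen topological entropy of the set G_μ of μ-generic points equals the measure-theoretic entropy h_μ of μ. -/

import Mathlib

open MeasureTheory Filter Topology Set
open scoped ENNReal NNReal

/-!  General definitions: Bowen topological entropy (via covers by Bowen balls),
measure-theoretic (Kolmogorov–Sinai) entropy, generic points, saturated systems,
and the specification property. -/

variable {X : Type*}

/-- The Bowen ball of center `x`, order `n`, radius `ε` (for the metric
`d_n(x,y) = max_{0 ≤ j < n} d(T^j x, T^j y)`). -/
def bowenBall [PseudoMetricSpace X] (T : X → X) (x : X) (n : ℕ) (ε : ℝ) : Set X :=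
  {y | ∀ j < n, dist (T^[j] x) (T^[j] y) < ε}

/-- `H_n^s(Z,ε)`: infimum of `Σ_i exp(-s n_i)` over countable covers of `Z` by Bowen balls
`B_{n_i}(x_i,ε)` with all `n_i ≥ n`. -/
noncomputable def bowenH [PseudoMetricSpace X] (T : X → X) (Z : Set X) (s ε : ℝ) (n : ℕ) :
    ℝ≥0∞ :=
  ⨅ (C : Set (X × ℕ)) (_ : C.Countable) (_ : ∀ p ∈ C, n ≤ p.2)
    (_ : Z ⊆ ⋃ p ∈ C, bowenBall T p.1 p.2 ε),
    ∑' p : C, ENNReal.ofReal (Real.exp (-s * ((p : X × ℕ).2 : ℝ)))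

/-- `h_top(Z,ε)`: the critical exponent of `s ↦ H^s(Z,ε) = sup_n H_n^s(Z,ε)`. -/
noncomputable def bowenEntropyRes [PseudoMetricSpace X] (T : X → X) (Z : Set X) (ε : ℝ) :
    ℝ≥0∞ :=
  sInf ((fun s : ℝ≥0 => (s : ℝ≥0∞)) '' {s : ℝ≥0 | (⨆ n, bowenH T Z (s : ℝ) ε n) = 0})

/-- Bowen topological entropy of a subset `Z`: `h_top(Z) = lim_{ε → 0} h_top(Z,ε)`
(the limit being a supremum by monotonicity in `ε`). -/
noncomputable def bowenEntropy [PseudoMetricSpace X] (T : X → X) (Z : Set X) : ℝ≥0∞ :=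
  ⨆ (ε : ℝ) (_ : 0 < ε), bowenEntropyRes T Z ε

/-- Entropy of the partition `P ∨ T⁻¹P ∨ ⋯ ∨ T⁻⁽ⁿ⁻¹⁾P`, where a countable partition is
encoded as a function `P : X → ℕ`: it is the Shannon entropy of the map
`x ↦ (P x, P (T x), …, P (Tⁿ⁻¹ x))`. -/
noncomputable def partInfo [MeasurableSpace X] (T : X → X) (μ : Measure X) (P : X → ℕ)
    (n : ℕ) : ℝ≥0∞ :=
  ∑' l : List ℕ, ENNReal.ofReal (Real.negMulLog
    ((μ ((fun x => (List.range n).map fun j => P (T^[j] x)) ⁻¹' {l})).toReal))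

/-- Measure-theoretic (Kolmogorov–Sinai) entropy `h_μ(T)`: supremum over finite measurable
partitions `P` of `lim_n (1/n) H_μ(P ∨ T⁻¹P ∨ ⋯ ∨ T⁻⁽ⁿ⁻¹⁾P)` (the limit exists by
subadditivity, so it may be written as a `liminf`). -/
noncomputable def ksEntropy [MeasurableSpace X] (T : X → X) (μ : Measure X) : ℝ≥0∞ :=
  ⨆ (P : X → ℕ) (_ : Measurable P) (_ : (Set.range P).Finite),
    Filter.atTop.liminf fun n : ℕ => partInfo T μ P n / (n : ℝ≥0∞)

/-- `x` is a generic point for `μ` : the empirical measures `(1/n) Σ_{j<n} δ_{T^j x}`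
converge to `μ` in the weak-star topology, i.e. Birkhoff averages of every continuous
function converge to its integral. -/
def IsGeneric [TopologicalSpace X] [MeasurableSpace X] (T : X → X) (μ : Measure X)
    (x : X) : Prop :=
  ∀ f : C(X, ℝ), Tendsto (fun n : ℕ => (∑ j ∈ Finset.range n, f (T^[j] x)) / (n : ℝ))
    atTop (𝓝 (∫ y, f y ∂μ))

/-- `μ ∈ V(x)` : `μ` is a weak-star limit point of the empirical measures of `x`. -/
def IsLimitMeasure [TopologicalSpace X] [MeasurableSpace X] (T : X → X) (x : X)
    (μ : Measure X) : Prop :=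
  ∃ φ : ℕ → ℕ, StrictMono φ ∧ ∀ f : C(X, ℝ),
    Tendsto (fun m : ℕ => (∑ j ∈ Finset.range (φ m), f (T^[j] x)) / (φ m : ℝ))
      atTop (𝓝 (∫ y, f y ∂μ))

/-- A system is saturated if `h_top(G_μ) = h_μ` for every invariant Borel probability
measure `μ`. -/
def Saturated [PseudoMetricSpace X] [MeasurableSpace X] (T : X → X) : Prop :=
  ∀ μ : Measure X, IsProbabilityMeasure μ → MeasurePreserving T μ μ →
    bowenEntropy T {x | IsGeneric T μ x} = ksEntropy T μ

/-- The specification property. -/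
def SpecificationProperty [PseudoMetricSpace X] (T : X → X) : Prop :=
  ∀ ε : ℝ, 0 < ε → ∃ m : ℕ, 1 ≤ m ∧
    ∀ k : ℕ, 2 ≤ k → ∀ x : ℕ → X, ∀ a b : ℕ → ℕ,
      (∀ i < k, a i ≤ b i) →
      (∀ i, i + 1 < k → b i + m ≤ a (i + 1)) →
      ∃ y : X, ∀ i < k, ∀ n ≤ b i - a i,
        dist (T^[a i + n] y) (T^[n] (x i)) < ε

/-!
*Upper bound.* Choose a fine finite partition whose frontiers are `μ`-null. The frequency of each
`k`-word in the itinerary of a generic point then converges to the `μ`-measure of its cylinder, and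
comparing with the product weights of the `k`-block distribution (an exponential Chebyshev
inequality) shows that at most `exp (n (H_k / k + o(1)))` itineraries of length `n` have these
frequencies. Points with the same itinerary lie in a common Bowen ball.

*Lower bound.* For large `m`, the law of large numbers applied to `N` independent `μ`-distributed
points, with their `m`-itineraries, produces about `exp (N m h)` separated `N`-tuples of orbit
segments of length `m` whose Birkhoff sums are nearly those of `μ`. Specification glues each tuple
into one orbit segment. Gluing such segments again, at scales decreasing to `0` so slowly that the
gaps and the length of the current block stay negligible, gives a Moran-type set of generic points;
the uniform measure on its codes and the mass distribution principle bound its entropy from below by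
`h`, for every `h < h_μ`.
-/

open scoped Finset

/-! ### Counting -/

section Counting

variable {ι β : Type*} [Fintype ι] [DecidableEq ι] [Fintype β]

lemma card_filter_sum_le_le_exp_mul_prod (φ : ι → β → ℝ) (c : ℝ) :
    (#{B : ι → β | ∑ i, φ i (B i) ≤ c} : ℝ) ≤ Real.exp c * ∏ i, ∑ b, Real.exp (-φ i b) := by
  classical
  have one_le_weight : ∀ B ∈ ({B | ∑ i, φ i (B i) ≤ c} : Finset (ι → β)),
      1 ≤ Real.exp c * ∏ i, Real.exp (-φ i (B i)) := by
    intro B hB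
    rw [← Real.exp_sum, ← Real.exp_add, Real.one_le_exp_iff, Finset.sum_neg_distrib]
    linarith [(Finset.mem_filter.1 hB).2]
  calc (#{B : ι → β | ∑ i, φ i (B i) ≤ c} : ℝ)
      = ∑ B : ι → β with ∑ i, φ i (B i) ≤ c, 1 := by simp
    _ ≤ ∑ B : ι → β with ∑ i, φ i (B i) ≤ c, Real.exp c * ∏ i, Real.exp (-φ i (B i)) :=
        Finset.sum_le_sum one_le_weight
    _ ≤ ∑ B : ι → β, Real.exp c * ∏ i, Real.exp (-φ i (B i)) :=
        Finset.sum_le_sum_of_subset_of_nonneg (Finset.filter_subset _ _)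
          fun B _ _ => by positivity
    _ = Real.exp c * ∏ i, ∑ b, Real.exp (-φ i b) := by rw [← Finset.mul_sum, Fintype.prod_sum]

variable [DecidableEq β]

lemma card_filter_hammingDist_le_le_exp (w : ι → β) {L : ℝ} (hL : 0 ≤ L) (r : ℝ) :
    (#{w' : ι → β | (hammingDist w w' : ℝ) ≤ r} : ℝ) ≤
      Real.exp (L * r + Fintype.card β * Real.exp (-L) * Fintype.card ι) := by
  have letter_le : ∀ i, ∑ b, Real.exp (-if w i ≠ b then L else 0) ≤
      Real.exp (Fintype.card β * Real.exp (-L)) := by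
    intro i
    calc ∑ b, Real.exp (-if w i ≠ b then L else 0)
        ≤ ∑ b, ((if w i = b then 1 else 0) + Real.exp (-L)) := by
          refine Finset.sum_le_sum fun b _ => ?_
          by_cases h : w i = b <;> simp [h, Real.exp_nonneg]
      _ = Fintype.card β * Real.exp (-L) + 1 := by
          simp [Finset.sum_add_distrib, add_comm]
      _ ≤ _ := Real.add_one_le_exp _
  calc (#{w' : ι → β | (hammingDist w w' : ℝ) ≤ r} : ℝ)
      ≤ #{w' : ι → β | ∑ i, (if w i ≠ w' i then L else 0) ≤ L * r} := by
        refine Nat.cast_le.2 (Finset.card_le_card (Finset.monotone_filter_right _ fun w' _ h => ?_))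
        rw [← Finset.sum_filter, Finset.sum_const, nsmul_eq_mul, mul_comm]
        exact mul_le_mul_of_nonneg_left h hL
    _ ≤ Real.exp (L * r) * ∏ i, ∑ b, Real.exp (-if w i ≠ b then L else 0) :=
        card_filter_sum_le_le_exp_mul_prod (fun i b => if w i ≠ b then L else 0) _
    _ ≤ Real.exp (L * r) * ∏ _i : ι, Real.exp (Fintype.card β * Real.exp (-L)) := by
        gcongr with i; exact letter_le i
    _ = _ := by
        rw [Finset.prod_const, ← Real.exp_nat_mul, ← Real.exp_add, Finset.card_univ]; ring_nf

end Counting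

lemma exists_card_hammingBall_le_exp (β : Type*) [Fintype β] [DecidableEq β] {η : ℝ}
    (hη : 0 < η) :
    ∃ κ > 0, ∀ (ι : Type*) [Fintype ι] [DecidableEq ι] (w : ι → β),
      (#{w' : ι → β | (hammingDist w w' : ℝ) ≤ κ * Fintype.card ι} : ℝ) ≤
        Real.exp (η * Fintype.card ι) := by
  have hlim : Tendsto (fun L : ℝ => Fintype.card β * Real.exp (-L)) atTop (𝓝 0) := by
    simpa using Real.tendsto_exp_neg_atTop_nhds_zero.const_mul (Fintype.card β : ℝ)
  obtain ⟨L, hLη, hL⟩ :=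
    ((hlim.eventually (gt_mem_nhds (half_pos hη))).and (eventually_gt_atTop 0)).exists
  refine ⟨η / (2 * L), by positivity, fun ι _ _ w => ?_⟩
  refine (card_filter_hammingDist_le_le_exp w hL.le _).trans (Real.exp_le_exp.2 ?_)
  have : L * (η / (2 * L) * Fintype.card ι) = η / 2 * Fintype.card ι := by field_simp
  nlinarith [Nat.cast_nonneg (α := ℝ) (Fintype.card ι)]

lemma exists_pairwise_not_card_le_card_mul {β : Type*} (V : Finset β) (R : β → β → Prop)
    [DecidableRel R] (hrefl : ∀ v, R v v) (hsymm : ∀ v w, R v w → R w v) {b : ℝ}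
    (hb : ∀ v ∈ V, (#{w ∈ V | R v w} : ℝ) ≤ b) :
    ∃ V' ⊆ V, (V' : Set β).Pairwise (fun v w => ¬ R v w) ∧ (#V : ℝ) ≤ #V' * b := by
  classical
  obtain ⟨V', -, hV'⟩ := (V.powerset.filter fun A : Finset β =>
    (A : Set β).Pairwise fun v w => ¬ R v w).exists_le_maximal (a := ∅) (by simp)
  obtain ⟨hV'V, hsep⟩ := by simpa using hV'.prop
  have hcover : V ⊆ V'.biUnion fun v => {w ∈ V | R v w} := by
    intro w hw
    by_contra hfar
    replace hfar : ∀ v ∈ V', ¬ R v w := by simpa [hw] using hfar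
    have hinsert : insert w V' ≤ V' := by
      refine hV'.le_of_ge ?_ (Finset.subset_insert w V')
      simp only [Finset.mem_filter, Finset.mem_powerset, Finset.coe_insert]
      exact ⟨Finset.insert_subset hw hV'V, hsep.insert fun v hv _ =>
        ⟨fun h => hfar v hv (hsymm _ _ h), hfar v hv⟩⟩
    exact hfar w (hinsert (Finset.mem_insert_self w V')) (hrefl w)
  refine ⟨V', hV'V, hsep, ?_⟩
  calc (#V : ℝ) ≤ ∑ v ∈ V', (#{w ∈ V | R v w} : ℝ) := by
        exact_mod_cast (Finset.card_le_card hcover).trans Finset.card_biUnion_le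
    _ ≤ ∑ _v ∈ V', b := Finset.sum_le_sum fun v hv => hb v (hV'V hv)
    _ = #V' * b := by rw [Finset.sum_const, nsmul_eq_mul]

lemma sum_range_mul_eq_sum_sum {M : Type*} [AddCommMonoid M] (g : ℕ → M) (m t : ℕ) :
    ∑ i ∈ Finset.range (m * t), g i =
      ∑ l ∈ Finset.range t, ∑ r ∈ Finset.range m, g (m * l + r) := by
  induction t with
  | zero => simp
  | succ t ih => rw [mul_add_one, Finset.sum_range_add, ih, Finset.sum_range_succ]

lemma exists_offset_sum_le {m t : ℕ} (hm : 0 < m) (g : ℕ → ℝ) {c : ℝ}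
    (h : ∑ i ∈ Finset.range (m * t), g i ≤ (m * t : ℕ) * c) :
    ∃ r < m, ∑ l ∈ Finset.range t, g (m * l + r) ≤ t * c := by
  rw [sum_range_mul_eq_sum_sum, Finset.sum_comm] at h
  obtain ⟨r, hr, hle⟩ := Finset.exists_le_of_sum_le (s := Finset.range m)
    (g := fun _ => (t : ℝ) * c) ⟨0, by simpa using hm⟩ (h.trans (by simp; linarith))
  exact ⟨r, Finset.mem_range.1 hr, hle⟩

/-! ### Entropy of itineraries -/

/-- The itinerary `(P x, P (T x), …, P (T^(m-1) x))` of `x` with respect to the partition into the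
level sets of `P`; its level sets form the refinement `P ∨ T⁻¹P ∨ ⋯ ∨ T⁻⁽ᵐ⁻¹⁾P`. -/
def itinerary {α : Type*} (T : X → X) (P : X → α) (m : ℕ) (x : X) : Fin m → α :=
  fun j => P (T^[j] x)

/-- The Shannon entropy, in nats, of the distribution of a finite-valued map `W`. -/
noncomputable def shannonEntropy [MeasurableSpace X] {α : Type*} [Fintype α] (μ : Measure X)
    (W : X → α) : ℝ :=
  ∑ w, Real.negMulLog (μ.real (W ⁻¹' {w}))

/-- The information function of `W`: minus the logarithm of the measure of the level set through
`x`. It takes the value `0` on null level sets. -/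
noncomputable def information [MeasurableSpace X] {α : Type*} (μ : Measure X) (W : X → α)
    (x : X) : ℝ :=
  -Real.log (μ.real (W ⁻¹' {W x}))

section Entropy

variable [MeasurableSpace X] {α : Type*} {T : X → X} {μ : Measure X}

lemma measurable_itinerary [MeasurableSpace α] (hT : Measurable T) {P : X → α}
    (hP : Measurable P) (m : ℕ) : Measurable (itinerary T P m) :=
  measurable_pi_lambda _ fun j => hP.comp (hT.iterate j)

lemma shannonEntropy_nonneg [Fintype α] [IsProbabilityMeasure μ] (W : X → α) :
    0 ≤ shannonEntropy μ W :=
  Finset.sum_nonneg fun _ _ => Real.negMulLog_nonneg measureReal_nonneg measureReal_le_one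

lemma measurable_information [Countable α] [MeasurableSpace α] [MeasurableSingletonClass α]
    {W : X → α} (hW : Measurable W) : Measurable (information μ W) :=
  (measurable_of_countable fun w => -Real.log (μ.real (W ⁻¹' {w}))).comp hW

variable [MeasurableSpace α] [MeasurableSingletonClass α] [IsFiniteMeasure μ] {W : X → α}

lemma integrable_information [Finite α] (hW : Measurable W) : Integrable (information μ W) μ :=
  (Integrable.of_finite (f := fun w => -Real.log (μ.real (W ⁻¹' {w})))).comp_measurable hW

lemma integral_information [Fintype α] (hW : Measurable W) :
    ∫ x, information μ W x ∂μ = shannonEntropy μ W := by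
  calc ∫ x, information μ W x ∂μ
      = ∫ w, -Real.log (μ.real (W ⁻¹' {w})) ∂μ.map W :=
        (integral_map (f := fun w => -Real.log (μ.real (W ⁻¹' {w}))) hW.aemeasurable
          (measurable_of_finite _).aestronglyMeasurable).symm
    _ = ∑ w, (μ.map W).real {w} • -Real.log (μ.real (W ⁻¹' {w})) :=
        integral_fintype Integrable.of_finite
    _ = shannonEntropy μ W := by
        refine Finset.sum_congr rfl fun w _ => ?_
        rw [map_measureReal_apply hW (measurableSet_singleton w), Real.negMulLog, smul_eq_mul,
          mul_neg, neg_mul]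

end Entropy

section KolmogorovSinai

variable [MeasurableSpace X] {T : X → X} {μ : Measure X} [IsProbabilityMeasure μ] {K : ℕ}

lemma partInfo_eq_ofReal_shannonEntropy (P : X → Fin K) (m : ℕ) :
    partInfo T μ (fun x => P x) m = ENNReal.ofReal (shannonEntropy μ (itinerary T P m)) := by
  let toList : (Fin m → Fin K) → List ℕ := fun w => List.ofFn fun j => (w j : ℕ)
  have toList_injective : Function.Injective toList := fun w w' h =>
    funext fun j => Fin.ext (congrFun (List.ofFn_injective h) j)
  have toList_itinerary (x : X) :
      ((List.range m).map fun j => (P (T^[j] x) : ℕ)) = toList (itinerary T P m x) := by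
    apply List.ext_getElem <;> simp [toList, itinerary]
  simp only [partInfo, toList_itinerary]
  rw [← toList_injective.tsum_eq, tsum_fintype, shannonEntropy, ENNReal.ofReal_sum_of_nonneg
    fun _ _ => Real.negMulLog_nonneg measureReal_nonneg measureReal_le_one]
  · refine Finset.sum_congr rfl fun w _ => ?_
    have : (fun x => toList (itinerary T P m x)) ⁻¹' {toList w} = itinerary T P m ⁻¹' {w} :=
      Set.ext fun x => toList_injective.eq_iff
    rw [this, measureReal_def]
  · intro l hl
    by_contra hne
    have : (fun x => toList (itinerary T P m x)) ⁻¹' {l} = ∅ :=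
      eq_empty_of_forall_notMem fun x hx => hne ⟨_, hx⟩
    simp [this] at hl

lemma frequently_shannonEntropy_lt {s : ℝ≥0} (hs : ksEntropy T μ < s) {P : X → Fin K}
    (hP : Measurable P) : ∃ᶠ m in atTop, shannonEntropy μ (itinerary T P m) < m * s := by
  have hfin : (range fun x => (P x : ℕ)).Finite :=
    (finite_lt_nat K).subset (range_subset_iff.2 fun x => (P x).2)
  have hlim : atTop.liminf (fun m : ℕ => partInfo T μ (fun x => P x) m / (m : ℝ≥0∞)) < s := by
    refine lt_of_le_of_lt ?_ hs
    exact le_iSup₂_of_le _ (measurable_from_top.comp hP) (le_iSup_of_le hfin le_rfl)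
  refine ((frequently_lt_of_liminf_lt (by isBoundedDefault) hlim).and_eventually
    (eventually_gt_atTop 0)).mono fun m ⟨hm, hm0⟩ => ?_
  rw [partInfo_eq_ofReal_shannonEntropy,
    ENNReal.div_lt_iff (.inl (by simpa using hm0.ne')) (.inl (by simp)),
    ← ENNReal.ofReal_coe_nnreal, ← ENNReal.ofReal_natCast, ← ENNReal.ofReal_mul s.coe_nonneg,
    ENNReal.ofReal_lt_ofReal_iff_of_nonneg (shannonEntropy_nonneg _)] at hm
  rwa [mul_comm]

lemma exists_le_shannonEntropy_of_lt_ksEntropy {c : ℝ≥0} (hc : c < ksEntropy T μ) :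
    ∃ (K : ℕ) (P : X → Fin K), Measurable P ∧
      ∀ᶠ m : ℕ in atTop, m * c ≤ shannonEntropy μ (itinerary T P m) := by
  simp only [ksEntropy, lt_iSup_iff] at hc
  obtain ⟨P, hP, hfin, hlim⟩ := hc
  obtain ⟨K, hK⟩ := hfin.bddAbove
  let Q : X → Fin (K + 1) := fun x => ⟨P x, Nat.lt_succ_of_le (hK (mem_range_self x))⟩
  have hQ : Measurable Q := measurable_to_countable' fun a => by
    simpa [Q, preimage, Fin.ext_iff] using hP (measurableSet_singleton (a : ℕ))
  refine ⟨K + 1, Q, hQ, ?_⟩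
  filter_upwards [eventually_lt_of_lt_liminf hlim, eventually_gt_atTop 0] with m hm hm0
  change c < partInfo T μ (fun x => Q x) m / m at hm
  rw [partInfo_eq_ofReal_shannonEntropy,
    ENNReal.lt_div_iff_mul_lt (.inl (by simpa using hm0.ne')) (.inl (by simp)),
    ← ENNReal.ofReal_coe_nnreal, ← ENNReal.ofReal_natCast, ← ENNReal.ofReal_mul c.coe_nonneg] at hm
  rw [mul_comm]
  exact (ENNReal.ofReal_le_ofReal_iff (shannonEntropy_nonneg _)).1 hm.le

end KolmogorovSinai

/-! ### Bounds for the Bowen entropy of a subset -/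

section BowenEntropy

variable [PseudoMetricSpace X] {T : X → X} {Z : Set X} {s ε : ℝ} {n n₀ : ℕ}

lemma bowenH_mono {Z' : Set X} (hZ : Z ⊆ Z') : bowenH T Z s ε n ≤ bowenH T Z' s ε n :=
  iInf_mono fun _ => iInf_mono fun _ => iInf_mono fun _ => iInf_mono' fun h => ⟨hZ.trans h, le_rfl⟩

lemma bowenH_le_tsum {C : Set (X × ℕ)} (hC : C.Countable) (hn : ∀ p ∈ C, n ≤ p.2)
    (hZ : Z ⊆ ⋃ p ∈ C, bowenBall T p.1 p.2 ε) :
    bowenH T Z s ε n ≤ ∑' p : C, ENNReal.ofReal (Real.exp (-s * ((p : X × ℕ).2 : ℝ))) :=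
  iInf_le_of_le C <| iInf_le_of_le hC <| iInf_le_of_le hn <| iInf_le _ hZ

lemma bowenH_iUnion_eq_zero {Z : ℕ → Set X} (hZ : ∀ i, bowenH T (Z i) s ε n = 0) :
    bowenH T (⋃ i, Z i) s ε n = 0 := by
  refine le_antisymm (ENNReal.le_of_forall_pos_le_add fun δ hδ _ => ?_) zero_le
  obtain ⟨δ', hδ', hsum⟩ := ENNReal.exists_pos_sum_of_countable
    (ENNReal.coe_ne_zero.2 hδ.ne') ℕ
  have hlt : ∀ i, bowenH T (Z i) s ε n < δ' i := fun i => by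
    rw [hZ i]
    exact_mod_cast hδ' i
  simp only [bowenH, iInf_lt_iff] at hlt
  choose C hCcount hCn hCZ hCsum using hlt
  calc bowenH T (⋃ i, Z i) s ε n
      ≤ ∑' p : ⋃ i, C i, ENNReal.ofReal (Real.exp (-s * ((p : X × ℕ).2 : ℝ))) := by
        refine bowenH_le_tsum (countable_iUnion hCcount) (fun p hp => ?_)
          (iUnion_subset fun i => ?_)
        · obtain ⟨i, hi⟩ := mem_iUnion.1 hp
          exact hCn i p hi
        · exact (hCZ i).trans (biUnion_subset_biUnion_left (subset_iUnion C i))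
    _ ≤ ∑' i, ∑' p : C i, ENNReal.ofReal (Real.exp (-s * ((p : X × ℕ).2 : ℝ))) :=
        ENNReal.tsum_iUnion_le_tsum
          (fun p : X × ℕ => ENNReal.ofReal (Real.exp (-s * (p.2 : ℝ)))) C
    _ ≤ ∑' i, (δ' i : ℝ≥0∞) := ENNReal.tsum_le_tsum fun i => (hCsum i).le
    _ ≤ 0 + δ := by rw [zero_add]; exact hsum.le

lemma bowenH_le_card_mul {κ : Type*} (hn : n₀ ≤ n) (code : X → κ) {S : Finset κ}
    (hS : ∀ x ∈ Z, code x ∈ S)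
    (hcode : ∀ x ∈ Z, ∀ y ∈ Z, code x = code y → y ∈ bowenBall T x n ε) :
    bowenH T Z s ε n₀ ≤ #S * ENNReal.ofReal (Real.exp (-s * n)) := by
  classical
  rcases isEmpty_or_nonempty X with _ | _
  · exact (bowenH_le_tsum countable_empty (by simp) fun x => isEmptyElim x).trans (by simp)
  let centers : Finset (X × ℕ) := S.image fun k => (Function.invFunOn code Z k, n)
  have hcenters : ∀ p ∈ centers, p.2 = n := by simp +contextual [centers]
  refine (bowenH_le_tsum (C := centers) centers.countable_toSet
    (fun p hp => hn.trans_eq (hcenters p hp).symm) fun x hx => ?_).trans ?_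
  · refine mem_iUnion₂.2 ⟨(Function.invFunOn code Z (code x), n), ?_, ?_⟩
    · exact Finset.mem_image_of_mem _ (hS x hx)
    · exact hcode _ (Function.invFunOn_apply_mem hx) _ hx (Function.invFunOn_apply_eq hx)
  · rw [Finset.tsum_subtype' centers fun p => ENNReal.ofReal (Real.exp (-s * (p.2 : ℝ))),
      Finset.sum_congr rfl fun p hp => by rw [hcenters p hp], Finset.sum_const, nsmul_eq_mul]
    gcongr
    exact Finset.card_image_le

lemma measure_univ_le_bowenH {Ω : Type*} [MeasurableSpace Ω] (ν : Measure Ω) {Φ : Ω → X}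
    (hΦ : ∀ ω, Φ ω ∈ Z) (hν : ∀ x, ∀ n ≥ n₀,
      ν (Φ ⁻¹' bowenBall T x n ε) ≤ ENNReal.ofReal (Real.exp (-s * n))) :
    ν univ ≤ bowenH T Z s ε n₀ := by
  refine le_iInf₂ fun C hC => le_iInf₂ fun hn hZ => ?_
  calc ν univ ≤ ν (⋃ p ∈ C, Φ ⁻¹' bowenBall T p.1 p.2 ε) :=
        measure_mono fun ω _ => by simpa using hZ (hΦ ω)
    _ ≤ ∑' p : C, ν (Φ ⁻¹' bowenBall T (p : X × ℕ).1 (p : X × ℕ).2 ε) :=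
        measure_biUnion_le ν hC _
    _ ≤ _ := ENNReal.tsum_le_tsum fun p => hν _ _ (hn p p.2)

lemma infinitePi_uniformOn_cylinder {α : ℕ → Type*} [∀ i, Fintype (α i)] [∀ i, Nonempty (α i)]
    [∀ i, MeasurableSpace (α i)] [∀ i, MeasurableSingletonClass (α i)] (ω₀ : ∀ i, α i) (j : ℕ) :
    Measure.infinitePi (fun i => ProbabilityTheory.uniformOn (univ : Set (α i)))
      {ω | ∀ i < j, ω i = ω₀ i} =
      ENNReal.ofReal (∏ i ∈ Finset.range j, (Fintype.card (α i) : ℝ))⁻¹ := by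
  have (i : ℕ) : IsProbabilityMeasure (ProbabilityTheory.uniformOn (univ : Set (α i))) :=
    ProbabilityTheory.isProbabilityMeasure_uniformOn finite_univ univ_nonempty
  have hcyl : {ω | ∀ i < j, ω i = ω₀ i} = Set.pi (Finset.range j) fun i => {ω₀ i} := by
    ext ω; simp [Set.mem_pi]
  rw [hcyl, Measure.infinitePi_pi _ fun i _ => measurableSet_singleton _, ← Finset.prod_inv_distrib,
    ENNReal.ofReal_prod_of_nonneg fun i _ => by positivity]
  refine Finset.prod_congr rfl fun i _ => ?_
  rw [ProbabilityTheory.uniformOn_univ, Measure.count_singleton,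
    ENNReal.ofReal_inv_of_pos (by exact_mod_cast Fintype.card_pos), ENNReal.ofReal_natCast, one_div]

lemma one_le_bowenH_of_pi {α : ℕ → Type*} [∀ i, Fintype (α i)] [∀ i, Nonempty (α i)]
    {Φ : (∀ i, α i) → X} (hΦ : ∀ ω, Φ ω ∈ Z)
    (hsep : ∀ n ≥ n₀, ∃ j,
      (∀ ω ω', Φ ω' ∈ bowenBall T (Φ ω) n (2 * ε) → ∀ i < j, ω' i = ω i) ∧
      Real.exp (s * n) ≤ ∏ i ∈ Finset.range j, (Fintype.card (α i) : ℝ)) :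
    1 ≤ bowenH T Z s ε n₀ := by
  let _ (i : ℕ) : MeasurableSpace (α i) := ⊤
  let ν := Measure.infinitePi fun i => ProbabilityTheory.uniformOn (univ : Set (α i))
  have (i : ℕ) : IsProbabilityMeasure (ProbabilityTheory.uniformOn (univ : Set (α i))) :=
    ProbabilityTheory.isProbabilityMeasure_uniformOn finite_univ univ_nonempty
  rw [← measure_univ (μ := ν)]
  refine measure_univ_le_bowenH ν hΦ fun x n hn => ?_
  rcases (Φ ⁻¹' bowenBall T x n ε).eq_empty_or_nonempty with hempty | ⟨ω₀, hω₀⟩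
  · rw [hempty, measure_empty]
    exact zero_le
  obtain ⟨j, hcyl, hcard⟩ := hsep n hn
  calc ν (Φ ⁻¹' bowenBall T x n ε) ≤ ν {ω | ∀ i < j, ω i = ω₀ i} := by
        refine measure_mono fun ω hω => hcyl ω₀ ω fun l hl => ?_
        linarith [dist_triangle_left (T^[l] (Φ ω₀)) (T^[l] (Φ ω)) (T^[l] x), hω l hl, hω₀ l hl]
    _ = ENNReal.ofReal (∏ i ∈ Finset.range j, (Fintype.card (α i) : ℝ))⁻¹ :=
        infinitePi_uniformOn_cylinder ω₀ j
    _ ≤ ENNReal.ofReal (Real.exp (-s * n)) := by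
        rw [neg_mul, Real.exp_neg]
        exact ENNReal.ofReal_le_ofReal (inv_anti₀ (Real.exp_pos _) hcard)

lemma bowenEntropyRes_le {s : ℝ≥0} (hs : ∀ n, bowenH T Z s ε n = 0) :
    bowenEntropyRes T Z ε ≤ s :=
  sInf_le ⟨s, by simp [hs], rfl⟩

lemma le_bowenEntropyRes {h : ℝ≥0∞} (hh : ∀ s : ℝ≥0, s < h → ∃ n, bowenH T Z s ε n ≠ 0) :
    h ≤ bowenEntropyRes T Z ε := by
  refine le_sInf ?_
  rintro _ ⟨s, hs, rfl⟩
  by_contra! hlt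
  obtain ⟨n, hn⟩ := hh s hlt
  exact hn (ENNReal.iSup_eq_zero.1 hs n)

end BowenEntropy

/-! ### The upper bound -/

section NullFrontier

variable [TopologicalSpace X] [MeasurableSpace X] {μ : Measure X}

lemma measure_frontier_inter_eq_zero {A B : Set X} (hA : μ (frontier A) = 0)
    (hB : μ (frontier B) = 0) : μ (frontier (A ∩ B)) = 0 :=
  measure_mono_null ((frontier_inter_subset A B).trans
    (union_subset_union inter_subset_left inter_subset_right)) (measure_union_null hA hB)

lemma measure_frontier_biInter_eq_zero {ι : Type*} {s : Finset ι} {A : ι → Set X}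
    (hA : ∀ i ∈ s, μ (frontier (A i)) = 0) : μ (frontier (⋂ i ∈ s, A i)) = 0 := by
  classical
  induction s using Finset.induction_on with
  | empty => simp
  | insert a s _ ih =>
    rw [Finset.set_biInter_insert]
    exact measure_frontier_inter_eq_zero (hA a (Finset.mem_insert_self a s))
      (ih fun i hi => hA i (Finset.mem_insert_of_mem hi))

lemma measure_frontier_itinerary_eq_zero [OpensMeasurableSpace X] {T : X → X} (hT : Continuous T)
    (hμ : MeasurePreserving T μ μ) {α : Type*} {P : X → α}
    (hP : ∀ a, μ (frontier (P ⁻¹' {a})) = 0) {m : ℕ} (w : Fin m → α) :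
    μ (frontier (itinerary T P m ⁻¹' {w})) = 0 := by
  have hinter : itinerary T P m ⁻¹' {w} =
      ⋂ j ∈ (Finset.univ : Finset (Fin m)), T^[j] ⁻¹' (P ⁻¹' {w j}) := by
    ext x
    simp [itinerary, funext_iff]
  rw [hinter]
  refine measure_frontier_biInter_eq_zero fun j _ => ?_
  refine measure_mono_null ((hT.iterate j).frontier_preimage_subset _) ?_
  rw [(hμ.iterate j).measure_preimage isClosed_frontier.measurableSet.nullMeasurableSet]
  exact hP _

end NullFrontier

section Partition

variable [PseudoMetricSpace X] [CompactSpace X] [MeasurableSpace X] [OpensMeasurableSpace X]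

lemma exists_finset_cover_balls_null_frontier (μ : Measure X) [SFinite μ] {ε : ℝ} (hε : 0 < ε) :
    ∃ (K : ℕ) (B : Fin K → Set X), (∀ i, IsOpen (B i)) ∧ (∀ x, ∃ i, x ∈ B i) ∧
      (∀ i, ∀ x ∈ B i, ∀ y ∈ B i, dist x y < ε) ∧ ∀ i, μ (frontier (B i)) = 0 := by
  have hradius : ∀ x : X, ∃ r ∈ Ioo 0 (ε / 2), μ (frontier (Metric.ball x r)) = 0 := fun x => by
    simpa using exists_null_frontier_thickening μ {x} (half_pos hε)
  choose r hr hr_null using hradius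
  obtain ⟨t, -, ht⟩ := (isCompact_univ (X := X)).elim_nhds_subcover
    (fun x => Metric.ball x (r x)) fun x _ => Metric.ball_mem_nhds x (hr x).1
  refine ⟨#t, fun i => Metric.ball (t.equivFin.symm i : X) (r (t.equivFin.symm i)),
    fun i => Metric.isOpen_ball, fun x => ?_, fun i x hx y hy => ?_, fun i => hr_null _⟩
  · obtain ⟨z, hz, hxz⟩ := mem_iUnion₂.1 (ht (mem_univ x))
    exact ⟨t.equivFin ⟨z, hz⟩, by simpa using hxz⟩
  · linarith [dist_triangle_right x y (t.equivFin.symm i : X), Metric.mem_ball.1 hx,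
      Metric.mem_ball.1 hy, (hr (t.equivFin.symm i : X)).2]

lemma exists_fin_partition_null_frontier (μ : Measure X) [SFinite μ] {ε : ℝ} (hε : 0 < ε) :
    ∃ (K : ℕ) (P : X → Fin K), Measurable P ∧ (∀ x y, P x = P y → dist x y < ε) ∧
      ∀ a, μ (frontier (P ⁻¹' {a})) = 0 := by
  classical
  obtain ⟨K, B, hB_open, hB_cover, hB_dist, hB_null⟩ :=
    exists_finset_cover_balls_null_frontier μ hε
  let P : X → Fin K := fun x => Fin.find (fun i => x ∈ B i) (hB_cover x)
  have hP_mem : ∀ x, x ∈ B (P x) := fun x => Fin.find_spec (hB_cover x)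
  have hP_preimage : ∀ a, P ⁻¹' {a} = B a ∩ ⋂ i ∈ Finset.Iio a, (B i)ᶜ := by
    intro a
    ext x
    simp [P, Fin.find_eq_iff]
  refine ⟨K, P, measurable_to_countable' fun a => ?_,
    fun x y hxy => hB_dist _ x (hP_mem x) y (hxy ▸ hP_mem y), fun a => ?_⟩
  · rw [hP_preimage]
    exact (hB_open a).measurableSet.inter
      (Finset.measurableSet_biInter _ fun i _ => (hB_open i).measurableSet.compl)
  · rw [hP_preimage]
    exact measure_frontier_inter_eq_zero (hB_null a)
      (measure_frontier_biInter_eq_zero fun i _ => by rw [frontier_compl]; exact hB_null i)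

end Partition

/-- The empirical measure `(1/n) ∑_{j<n} δ_{T^j x}` of an orbit segment. -/
noncomputable def empiricalMeasure [MeasurableSpace X] (T : X → X) (x : X) (n : ℕ) : Measure X :=
  (n : ℝ≥0∞)⁻¹ • ∑ j ∈ Finset.range n, Measure.dirac (T^[j] x)

section EmpiricalMeasure

variable [MeasurableSpace X] {T : X → X} {x : X}

instance isProbabilityMeasure_empiricalMeasure (n : ℕ) [NeZero n] :
    IsProbabilityMeasure (empiricalMeasure T x n) :=
  ⟨by simpa [empiricalMeasure] using ENNReal.inv_mul_cancel (by simp [NeZero.ne n]) (by finiteness)⟩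

lemma integral_empiricalMeasure (n : ℕ) {f : X → ℝ} (hf : Measurable f) :
    ∫ y, f y ∂empiricalMeasure T x n = birkhoffSum T f n x / n := by
  rw [empiricalMeasure, integral_smul_measure,
    integral_finsetSum_measure fun i _ => integrable_dirac' hf.stronglyMeasurable (by finiteness)]
  simp [integral_dirac' _ _ hf.stronglyMeasurable, birkhoffSum, div_eq_inv_mul]

variable [TopologicalSpace X] [HasOuterApproxClosed X] [BorelSpace X] {μ : Measure X}
  [IsProbabilityMeasure μ]

lemma IsGeneric.tendsto_measureReal_empiricalMeasure (hx : IsGeneric T μ x) {s : Set X}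
    (hs : μ (frontier s) = 0) :
    Tendsto (fun n => (empiricalMeasure T x (n + 1)).real s) atTop (𝓝 (μ.real s)) := by
  let empirical : ℕ → ProbabilityMeasure X := fun n => ⟨empiricalMeasure T x (n + 1), inferInstance⟩
  have hlim : Tendsto empirical atTop (𝓝 ⟨μ, inferInstance⟩) := by
    refine ProbabilityMeasure.tendsto_iff_forall_integral_tendsto.2 fun f => ?_
    refine ((hx f.toContinuousMap).comp (tendsto_add_atTop_nat 1)).congr fun n => ?_
    exact (integral_empiricalMeasure (n + 1) f.continuous.measurable).symm
  exact (ENNReal.tendsto_toReal (by finiteness)).comp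
    (ProbabilityMeasure.tendsto_measure_of_null_frontier_of_tendsto' hlim hs)

lemma IsGeneric.tendsto_birkhoffSum_comp_div {α : Type*} [Fintype α] [MeasurableSpace α]
    [MeasurableSingletonClass α] (hx : IsGeneric T μ x) {W : X → α} (hW : Measurable W)
    (hW_null : ∀ w, μ (frontier (W ⁻¹' {w})) = 0) (φ : α → ℝ) :
    Tendsto (fun n : ℕ => birkhoffSum T (φ ∘ W) n x / n) atTop
      (𝓝 (∑ w, φ w * μ.real (W ⁻¹' {w}))) := by
  rw [← tendsto_add_atTop_iff_nat 1]
  refine (tendsto_finsetSum _ fun w _ =>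
    (hx.tendsto_measureReal_empiricalMeasure (hW_null w)).const_mul (φ w)).congr fun n => ?_
  rw [← integral_empiricalMeasure (n + 1) ((measurable_of_finite φ).comp hW)]
  calc ∑ w, φ w * (empiricalMeasure T x (n + 1)).real (W ⁻¹' {w})
      = ∫ w, φ w ∂(empiricalMeasure T x (n + 1)).map W := by
        rw [integral_fintype .of_finite]
        refine Finset.sum_congr rfl fun w _ => ?_
        rw [map_measureReal_apply hW (measurableSet_singleton w), smul_eq_mul, mul_comm]
    _ = ∫ y, (φ ∘ W) y ∂empiricalMeasure T x (n + 1) :=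
        integral_map hW.aemeasurable (measurable_of_finite φ).aestronglyMeasurable

end EmpiricalMeasure

section Coding

variable [PseudoMetricSpace X] {T : X → X} {Z : Set X} {s ε c : ℝ} {n₀ m t : ℕ} {α : Type*}
  {P : X → α}

lemma mem_bowenBall_of_itinerary_eq (hP : ∀ x y, P x = P y → dist x y < ε) (hm : 0 < m) {r : ℕ}
    (hr : r < m) {x y : X} (hprefix : itinerary T P m x = itinerary T P m y)
    (hblocks : ∀ l < t, itinerary T P m (T^[m * l + r] x) = itinerary T P m (T^[m * l + r] y)) :
    y ∈ bowenBall T x (m * t) ε := by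
  intro j hj
  refine hP _ _ ?_
  rcases lt_or_ge j r with hjr | hjr
  · exact congrFun hprefix ⟨j, hjr.trans hr⟩
  · have hl : (j - r) / m < t := Nat.div_lt_of_lt_mul (by omega)
    have hsplit : (j - r) % m + (m * ((j - r) / m) + r) = j := by
      have := Nat.mod_add_div (j - r) m
      omega
    simpa only [itinerary, ← Function.iterate_add_apply, hsplit] using
      congrFun (hblocks _ hl) ⟨(j - r) % m, Nat.mod_lt _ hm⟩

lemma bowenH_le_of_birkhoffSum_le [Fintype α] (hP : ∀ x y, P x = P y → dist x y < ε) (hm : 0 < m)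
    (φ : (Fin m → α) → ℝ)
    (hZ : ∀ x ∈ Z, birkhoffSum T (φ ∘ itinerary T P m) (m * t) x ≤ (m * t : ℕ) * c)
    (hn₀ : n₀ ≤ m * t) :
    bowenH T Z s ε n₀ ≤ ENNReal.ofReal (m * Fintype.card (Fin m → α) *
      (Real.exp c * (∑ w, Real.exp (-φ w)) / Real.exp (s * m)) ^ t) := by
  classical
  choose! r hr hrZ using fun x (hx : x ∈ Z) => exists_offset_sum_le hm _ (hZ x hx)
  let code : X → ℕ × (Fin m → α) × (Fin t → Fin m → α) := fun x =>
    (r x, itinerary T P m x, fun l => itinerary T P m (T^[m * l + r x] x))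
  let S : Finset (ℕ × (Fin m → α) × (Fin t → Fin m → α)) :=
    Finset.range m ×ˢ Finset.univ ×ˢ
      ({B | ∑ l, φ (B l) ≤ t * c} : Finset (Fin t → Fin m → α))
  have hcard : (#S : ℝ) ≤ m * Fintype.card (Fin m → α) *
      (Real.exp (t * c) * (∑ w, Real.exp (-φ w)) ^ t) := by
    have := card_filter_sum_le_le_exp_mul_prod (fun _ : Fin t => φ) (t * c)
    rw [Finset.prod_const, Finset.card_univ, Fintype.card_fin] at this
    rw [Finset.card_product, Finset.card_product, Finset.card_range, Finset.card_univ,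
      Nat.cast_mul, Nat.cast_mul, ← mul_assoc]
    gcongr
  calc bowenH T Z s ε n₀ ≤ #S * ENNReal.ofReal (Real.exp (-s * (m * t : ℕ))) := by
        refine bowenH_le_card_mul hn₀ code (fun x hx => ?_) fun x hx y _ hxy => ?_
        · simpa [S, code] using ⟨hr x hx, (Finset.sum_range _).symm.trans_le (hrZ x hx)⟩
        · simp only [code, Prod.mk.injEq] at hxy
          obtain ⟨hrxy, hprefix, hblocks⟩ := hxy
          refine mem_bowenBall_of_itinerary_eq hP hm (hr x hx) hprefix fun l hl => ?_
          simpa only [hrxy] using congrFun hblocks ⟨l, hl⟩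
    _ = ENNReal.ofReal (#S * Real.exp (-s * (m * t : ℕ))) := by
        rw [ENNReal.ofReal_mul (by positivity), ENNReal.ofReal_natCast]
    _ ≤ ENNReal.ofReal (m * Fintype.card (Fin m → α) *
          (Real.exp (t * c) * (∑ w, Real.exp (-φ w)) ^ t) * Real.exp (-s * (m * t : ℕ))) := by
        gcongr
    _ = _ := by
        rw [div_pow, mul_pow, ← Real.exp_nat_mul, ← Real.exp_nat_mul, div_eq_mul_inv,
          ← Real.exp_neg]
        push_cast
        ring_nf

lemma bowenH_eq_zero_of_eventually_birkhoffSum_le [Fintype α]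
    (hP : ∀ x y, P x = P y → dist x y < ε) (hm : 0 < m) {φ : (Fin m → α) → ℝ}
    (hφ : Real.exp c * ∑ w, Real.exp (-φ w) < Real.exp (s * m))
    (hZ : ∀ x ∈ Z, ∀ᶠ n : ℕ in atTop, birkhoffSum T (φ ∘ itinerary T P m) n x ≤ n * c) :
    bowenH T Z s ε n₀ = 0 := by
  let Z' : ℕ → Set X := fun N =>
    {x | ∀ n : ℕ, N ≤ n → birkhoffSum T (φ ∘ itinerary T P m) n x ≤ n * c}
  have hZ' : Z ⊆ ⋃ N, Z' N := fun x hx => mem_iUnion.2 (eventually_atTop.1 (hZ x hx))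
  refine le_antisymm ((bowenH_mono hZ').trans (bowenH_iUnion_eq_zero fun N => ?_).le) zero_le
  set q := Real.exp c * (∑ w, Real.exp (-φ w)) / Real.exp (s * m)
  have hlim : Tendsto (fun t : ℕ => ENNReal.ofReal (m * Fintype.card (Fin m → α) * q ^ t))
      atTop (𝓝 0) := by
    have := (tendsto_pow_atTop_nhds_zero_of_lt_one (r := q) (by positivity)
      ((div_lt_one (Real.exp_pos _)).2 hφ)).const_mul (m * Fintype.card (Fin m → α) : ℝ)
    simpa using ENNReal.tendsto_ofReal this
  refine le_antisymm (ge_of_tendsto hlim ?_) zero_le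
  filter_upwards [eventually_ge_atTop (max n₀ N)] with t ht
  have hmt : max n₀ N ≤ m * t := ht.trans (Nat.le_mul_of_pos_left t hm)
  exact bowenH_le_of_birkhoffSum_le hP hm φ (fun x hx => hx _ ((le_max_right _ _).trans hmt))
    ((le_max_left _ _).trans hmt)

end Coding

-- The optimal cost is `-log p`; adding `θ` to `p` keeps it finite on null letters.
lemma exists_cost_of_sum_negMulLog_lt {ι : Type*} [Fintype ι] {p : ι → ℝ} (hp : ∀ w, 0 ≤ p w)
    (hp_sum : ∑ w, p w = 1) {a : ℝ} (ha : ∑ w, Real.negMulLog (p w) < a) :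
    ∃ (φ : ι → ℝ) (c : ℝ), ∑ w, φ w * p w < c ∧
      Real.exp c * ∑ w, Real.exp (-φ w) < Real.exp a := by
  set H := ∑ w, Real.negMulLog (p w)
  obtain ⟨θ, hθ, hθa⟩ := exists_pos_mul_lt (half_pos (sub_pos.2 ha)) (Fintype.card ι : ℝ)
  refine ⟨fun w => -Real.log (p w + θ), (H + a) / 2, ?_, ?_⟩
  · calc ∑ w, -Real.log (p w + θ) * p w ≤ H := Finset.sum_le_sum fun w _ => by
          rcases (hp w).eq_or_lt with h | h
          · simp [← h]
          · have := Real.log_le_log h (le_add_of_nonneg_right hθ.le)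
            simp only [Real.negMulLog]
            nlinarith
      _ < (H + a) / 2 := by linarith
  · calc Real.exp ((H + a) / 2) * ∑ w, Real.exp (- -Real.log (p w + θ))
        = Real.exp ((H + a) / 2) * (Fintype.card ι * θ + 1) := by
          have (w : ι) : Real.exp (- -Real.log (p w + θ)) = p w + θ := by
            rw [neg_neg, Real.exp_log (add_pos_of_nonneg_of_pos (hp w) hθ)]
          simp only [this, Finset.sum_add_distrib, hp_sum, Finset.sum_const, Finset.card_univ,
            nsmul_eq_mul, add_comm (1 : ℝ)]
      _ ≤ Real.exp ((H + a) / 2) * Real.exp (Fintype.card ι * θ) := by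
          gcongr
          exact Real.add_one_le_exp _
      _ < Real.exp a := by
          rw [← Real.exp_add, Real.exp_lt_exp]
          linarith

theorem bowenEntropy_isGeneric_le_ksEntropy [PseudoMetricSpace X] [CompactSpace X]
    [MeasurableSpace X] [BorelSpace X] {T : X → X} (hT : Continuous T) {μ : Measure X}
    [IsProbabilityMeasure μ] (hμ : MeasurePreserving T μ μ) :
    bowenEntropy T {x | IsGeneric T μ x} ≤ ksEntropy T μ := by
  refine iSup₂_le fun ε hε => le_of_forall_gt_imp_ge_of_dense fun s hs => ?_
  induction s with
  | top => exact le_top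
  | coe s =>
    obtain ⟨K, P, hP, hP_dist, hP_null⟩ := exists_fin_partition_null_frontier μ hε
    obtain ⟨m, hm_entropy, hm⟩ := ((frequently_shannonEntropy_lt hs hP).and_eventually
      (eventually_gt_atTop 0)).exists
    have hW := measurable_itinerary hT.measurable hP m
    obtain ⟨φ, c, hφc, hφ⟩ := exists_cost_of_sum_negMulLog_lt
      (p := fun w => μ.real (itinerary T P m ⁻¹' {w})) (fun w => measureReal_nonneg)
      (by rw [sum_measureReal_preimage_singleton _ fun w _ => hW (measurableSet_singleton w)]; simp)
      (a := s * m) (by rwa [mul_comm] at hm_entropy)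
    refine bowenEntropyRes_le fun n₀ => ?_
    refine bowenH_eq_zero_of_eventually_birkhoffSum_le hP_dist hm hφ fun x hx => ?_
    have hlim := hx.tendsto_birkhoffSum_comp_div hW
      (measure_frontier_itinerary_eq_zero hT hμ hP_null) φ
    filter_upwards [hlim.eventually_lt_const hφc, eventually_gt_atTop 0] with n hn hn0
    rw [div_lt_iff₀ (by exact_mod_cast hn0)] at hn
    linarith

/-! ### Separated typical samples -/

section UniformSeparation

variable [PseudoMetricSpace X] [CompactSpace X] {α : Type*} [Finite α]

lemma exists_forall_dist_lt_imp_eq_of_isClosed {F : α → Set X} (hF : ∀ a, IsClosed (F a))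
    (hdisj : Pairwise fun a b => Disjoint (F a) (F b)) :
    ∃ ε > 0, ∀ a b, ∀ x ∈ F a, ∀ y ∈ F b, dist x y < ε → a = b := by
  have separated : ∀ a b, ∀ᶠ ε in 𝓝[>] (0 : ℝ), ∀ x ∈ F a, ∀ y ∈ F b, dist x y < ε → a = b := by
    intro a b
    obtain rfl | hab := eq_or_ne a b
    · simp
    obtain ⟨δ, hδ, hd⟩ := (hdisj hab).exists_thickenings (hF a).isCompact (hF b)
    filter_upwards [Ioo_mem_nhdsGT hδ] with ε hε x hx y hy hxy
    refine absurd (Metric.self_subset_thickening hδ _ hy) (disjoint_left.1 hd ?_)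
    exact Metric.mem_thickening_iff.2 ⟨x, hx, by rw [dist_comm]; exact hxy.trans hε.2⟩
  obtain ⟨ε, h, hε⟩ := ((eventually_all.2 fun a => eventually_all.2 (separated a)).and
    self_mem_nhdsWithin).exists
  exact ⟨ε, hε, h⟩

lemma exists_measureReal_compl_le_forall_dist_lt_imp_eq [MeasurableSpace X] [BorelSpace X]
    [MeasurableSpace α] [MeasurableSingletonClass α] (μ : Measure X) [IsFiniteMeasure μ]
    {P : X → α} (hP : Measurable P) {κ : ℝ} (hκ : 0 < κ) :
    ∃ U, MeasurableSet U ∧ μ.real Uᶜ ≤ κ ∧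
      ∃ ε > 0, ∀ x ∈ U, ∀ y ∈ U, dist x y < ε → P x = P y := by
  have := Fintype.ofFinite α
  obtain ⟨κ', hκ'0, hκ'⟩ : ∃ κ' > 0, Fintype.card α * κ' ≤ κ :=
    ⟨κ / (Fintype.card α + 1), by positivity, by
      rw [mul_div_assoc', div_le_iff₀ (by positivity)]; nlinarith⟩
  have closed_approx : ∀ a, ∃ F ⊆ P ⁻¹' {a}, IsClosed F ∧
      μ ((P ⁻¹' {a}) \ F) < ENNReal.ofReal κ' := fun a =>
    (hP (measurableSet_singleton a)).exists_isClosed_sdiff_lt (by finiteness) (by simpa)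
  choose F hFP hFc hF using closed_approx
  obtain ⟨ε, hε, hsep⟩ := exists_forall_dist_lt_imp_eq_of_isClosed hFc fun a b hab =>
    (Disjoint.preimage P (by simpa using hab)).mono (hFP a) (hFP b)
  refine ⟨⋃ a, F a, (isClosed_iUnion_of_finite hFc).measurableSet, ?_, ε, hε, ?_⟩
  · have compl_subset : (⋃ a, F a)ᶜ ⊆ ⋃ a, (P ⁻¹' {a}) \ F a := fun x hx =>
      mem_iUnion.2 ⟨P x, rfl, fun h => hx (mem_iUnion.2 ⟨_, h⟩)⟩
    calc μ.real (⋃ a, F a)ᶜ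
        ≤ ∑ a, μ.real ((P ⁻¹' {a}) \ F a) :=
          (measureReal_mono compl_subset).trans (measureReal_iUnion_fintype_le _)
      _ ≤ ∑ _a : α, κ' :=
          Finset.sum_le_sum fun a _ => ENNReal.toReal_le_of_le_ofReal hκ'0.le (hF a).le
      _ ≤ κ := by simpa using hκ'
  · simp only [mem_iUnion]
    rintro x ⟨a, ha⟩ y ⟨b, hb⟩ hxy
    rw [show P x = a from hFP a ha, show P y = b from hFP b hb]
    exact hsep a b x ha y hb hxy

end UniformSeparation

lemma hammingDist_comp_le_sum_indicator_compl {ι α : Type*} [Fintype ι] [DecidableEq α]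
    {P : X → α} {U : Set X} {x y : ι → X} (h : ∀ i, x i ∈ U → y i ∈ U → P (x i) = P (y i)) :
    (hammingDist (fun i => P (x i)) (fun i => P (y i)) : ℝ) ≤
      ∑ i, Uᶜ.indicator (1 : X → ℝ) (x i) + ∑ i, Uᶜ.indicator (1 : X → ℝ) (y i) := by
  classical
  rw [hammingDist, Finset.card_filter, Nat.cast_sum, ← Finset.sum_add_distrib]
  refine Finset.sum_le_sum fun i _ => ?_
  by_cases hx : x i ∈ U <;> by_cases hy : y i ∈ U
  · simp [h i hx hy, hx, hy]
  all_goals simp [hx, hy]; split_ifs <;> norm_num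

section Samples

variable [MeasurableSpace X] {μ : Measure X} [IsProbabilityMeasure μ]

lemma tendsto_infinitePi_abs_sum_sub_gt {G : X → ℝ} (hGm : Measurable G) (hG : Integrable G μ)
    {τ : ℝ} (hτ : 0 < τ) :
    Tendsto (fun N : ℕ => Measure.infinitePi (fun _ : ℕ => μ)
      {ω | N * τ < |∑ i ∈ Finset.range N, G (ω i) - N * ∫ x, G x ∂μ|}) atTop (𝓝 0) := by
  set ℙ := Measure.infinitePi fun _ : ℕ => μ
  have hmp : ∀ i : ℕ, MeasurePreserving (fun ω : ℕ → X => ω i) ℙ μ :=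
    measurePreserving_eval_infinitePi fun _ : ℕ => μ
  have hident : ∀ i, ProbabilityTheory.IdentDistrib (fun ω : ℕ → X => G (ω i))
      (fun ω => G (ω 0)) ℙ ℙ := fun i =>
    ProbabilityTheory.IdentDistrib.comp ⟨(hmp i).aemeasurable, (hmp 0).aemeasurable,
      (hmp i).map_eq.trans (hmp 0).map_eq.symm⟩ hGm
  have hlim := ProbabilityTheory.strong_law_ae (fun (i : ℕ) (ω : ℕ → X) => G (ω i))
    ((hmp 0).integrable_comp_of_integrable hG)
    (fun i j hij => (ProbabilityTheory.iIndepFun_infinitePi (P := fun _ : ℕ => μ)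
      (X := fun _ => G) fun _ => hGm).indepFun hij) hident
  refine tendsto_of_tendsto_of_tendsto_of_le_of_le' tendsto_const_nhds
    (tendstoInMeasure_of_tendsto_ae (fun n => ?_) hlim (.ofReal τ) (by simpa))
    (Eventually.of_forall fun _ => zero_le) ?_
  · exact Measurable.aestronglyMeasurable (by fun_prop)
  filter_upwards [eventually_gt_atTop 0] with N hN
  have hN' : (0 : ℝ) < N := by exact_mod_cast hN
  have hmean : ∫ ω, G (ω 0) ∂ℙ = ∫ x, G x ∂μ := by
    rw [← (hmp 0).map_eq, integral_map (hmp 0).aemeasurable hGm.aestronglyMeasurable]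
  refine measure_mono fun ω hω => ?_
  rw [mem_ofPred_eq, hmean, edist_dist, Real.dist_eq]
  refine ENNReal.ofReal_le_ofReal ?_
  rw [show (N : ℝ)⁻¹ • ∑ i ∈ Finset.range N, G (ω i) - ∫ x, G x ∂μ =
    (N : ℝ)⁻¹ * (∑ i ∈ Finset.range N, G (ω i) - N * ∫ x, G x ∂μ) by
      rw [smul_eq_mul]; field_simp, abs_mul, abs_of_pos (inv_pos.2 hN'), le_inv_mul_iff₀ hN']
  exact hω.le

lemma eventually_half_le_infinitePi_abs_sum_sub_le (𝒢 : Finset (X → ℝ))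
    (hm : ∀ G ∈ 𝒢, Measurable G) (hi : ∀ G ∈ 𝒢, Integrable G μ) {τ : ℝ} (hτ : 0 < τ) :
    ∀ᶠ N : ℕ in atTop, 1 / 2 ≤ (Measure.infinitePi fun _ : ℕ => μ).real
      {ω | ∀ G ∈ 𝒢, |∑ i ∈ Finset.range N, G (ω i) - N * ∫ x, G x ∂μ| ≤ N * τ} := by
  set ℙ := Measure.infinitePi fun _ : ℕ => μ
  have hbad := tendsto_finsetSum 𝒢 fun G hG =>
    tendsto_infinitePi_abs_sum_sub_gt (hm G hG) (hi G hG) hτ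
  rw [Finset.sum_const_zero] at hbad
  filter_upwards [hbad.eventually_lt_const (show (0 : ℝ≥0∞) < 1 / 2 by simp)] with N hN
  set S : Set (ℕ → X) :=
    {ω | ∀ G ∈ 𝒢, |∑ i ∈ Finset.range N, G (ω i) - N * ∫ x, G x ∂μ| ≤ N * τ} with hS
  have compl_subset : Sᶜ ⊆ ⋃ G ∈ 𝒢,
      {ω | N * τ < |∑ i ∈ Finset.range N, G (ω i) - N * ∫ x, G x ∂μ|} := by
    intro ω hω
    simpa [hS] using hω
  have compl_le : ℙ.real Sᶜ ≤ 1 / 2 := by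
    have := ENNReal.toReal_mono (by simp)
      (((measure_mono compl_subset).trans (measure_biUnion_finset_le _ _)).trans hN.le)
    simpa [measureReal_def] using this
  have one_le : (1 : ℝ) ≤ ℙ.real S + ℙ.real Sᶜ := by
    simpa using measureReal_union_le (μ := ℙ) S Sᶜ
  linarith

variable {α : Type*} [MeasurableSpace α] [MeasurableSingletonClass α] {W : X → α}

lemma infinitePi_forall_eq_le_exp_neg (hW : Measurable W) {N : ℕ} {ω : ℕ → X} {c : ℝ}
    (hc : c ≤ ∑ i ∈ Finset.range N, information μ W (ω i)) :
    (Measure.infinitePi fun _ : ℕ => μ).real {ω' | ∀ i < N, W (ω' i) = W (ω i)} ≤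
      Real.exp (-c) := by
  have hpi : {ω' : ℕ → X | ∀ i < N, W (ω' i) = W (ω i)} =
      (Finset.range N : Set ℕ).pi fun i => W ⁻¹' {W (ω i)} := by
    ext
    simp [Set.mem_pi]
  rw [hpi, measureReal_def, Measure.infinitePi_pi _ fun i _ => hW (measurableSet_singleton _),
    ENNReal.toReal_prod]
  by_cases hnull : ∃ i ∈ Finset.range N, μ.real (W ⁻¹' {W (ω i)}) = 0
  · obtain ⟨i, hi, h0⟩ := hnull
    rw [Finset.prod_eq_zero hi h0]
    positivity
  push Not at hnull
  calc ∏ i ∈ Finset.range N, μ.real (W ⁻¹' {W (ω i)})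
      = ∏ i ∈ Finset.range N, Real.exp (-information μ W (ω i)) :=
        Finset.prod_congr rfl fun i hi => by
          rw [information, neg_neg, Real.exp_log (measureReal_nonneg.lt_of_ne' (hnull i hi))]
    _ ≤ Real.exp (-c) := by
        rw [← Real.exp_sum, Finset.sum_neg_distrib]
        exact Real.exp_le_exp.2 (neg_le_neg hc)

lemma infinitePi_mul_exp_le_ncard_image (hW : Measurable W) {β : Type*} [Finite β] {N : ℕ}
    {code : (ℕ → X) → β} (hcode : ∀ ω ω', code ω = code ω' → ∀ i < N, W (ω i) = W (ω' i))
    {S : Set (ℕ → X)} {c : ℝ} (hc : ∀ ω ∈ S, c ≤ ∑ i ∈ Finset.range N, information μ W (ω i)) :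
    (Measure.infinitePi fun _ : ℕ => μ).real S * Real.exp c ≤ (code '' S).ncard := by
  classical
  set ℙ := Measure.infinitePi fun _ : ℕ => μ
  set V := (toFinite (code '' S)).toFinset with hV
  have fibre_le : ∀ v ∈ V, ℙ.real (code ⁻¹' {v}) ≤ Real.exp (-c) := by
    intro v hv
    obtain ⟨ω, hω, rfl⟩ := by simpa [hV] using hv
    exact (measureReal_mono fun ω' hω' => hcode ω' ω hω').trans
      (infinitePi_forall_eq_le_exp_neg hW (hc ω hω))
  have subset_fibres : S ⊆ ⋃ v ∈ V, code ⁻¹' {v} := fun ω hω =>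
    mem_iUnion₂.2 ⟨code ω, by simpa [hV] using ⟨ω, hω, rfl⟩, rfl⟩
  rw [ncard_eq_toFinset_card _ (toFinite _), ← le_div_iff₀ (Real.exp_pos c), div_eq_mul_inv,
    ← Real.exp_neg]
  calc ℙ.real S
      ≤ ∑ v ∈ V, ℙ.real (code ⁻¹' {v}) :=
        (measureReal_mono subset_fibres (measure_ne_top _ _)).trans
          (measureReal_biUnion_finset_le V _)
    _ ≤ #V * Real.exp (-c) := (Finset.sum_le_sum fibre_le).trans_eq (by simp)

end Samples

/-- The `N × m` array formed by the first `m` points of the orbits of the samples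
`ω 0, …, ω (N - 1)`. -/
def orbitArray (T : X → X) (N m : ℕ) (ω : ℕ → X) (q : Fin N × Fin m) : X :=
  T^[q.2] (ω q.1)

lemma sum_orbitArray {E : Type*} [AddCommMonoid E] (T : X → X) (N m : ℕ) (ω : ℕ → X) (g : X → E) :
    ∑ q, g (orbitArray T N m ω q) = ∑ i ∈ Finset.range N, birkhoffSum T g m (ω i) := by
  simp only [Fintype.sum_prod_type, Finset.sum_range, orbitArray, birkhoffSum]

section SeparatedSamples

variable [MeasurableSpace X] {T : X → X} {μ : Measure X}

lemma measurable_birkhoffSum {E : Type*} [AddCommMonoid E] [MeasurableSpace E] [MeasurableAdd₂ E]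
    (hT : Measurable T) {g : X → E} (hg : Measurable g) (m : ℕ) :
    Measurable (birkhoffSum T g m) :=
  Finset.measurable_fun_sum _ fun j _ => hg.comp (hT.iterate j)

lemma integrable_birkhoffSum (hT : MeasurePreserving T μ μ) {g : X → ℝ} (hg : Integrable g μ)
    (m : ℕ) : Integrable (birkhoffSum T g m) μ :=
  integrable_finsetSum _ fun j _ => (hT.iterate j).integrable_comp_of_integrable hg

lemma integral_birkhoffSum (hT : MeasurePreserving T μ μ) {g : X → ℝ} (hg : Integrable g μ)
    (m : ℕ) : ∫ x, birkhoffSum T g m x ∂μ = m * ∫ x, g x ∂μ := by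
  have integral_iterate : ∀ j, ∫ x, g (T^[j] x) ∂μ = ∫ x, g x ∂μ := fun j => by
    have hmap := (hT.iterate j).map_eq
    rw [← integral_map (hT.iterate j).aemeasurable (hmap.symm ▸ hg.aestronglyMeasurable), hmap]
  have hi : ∀ j, Integrable (fun x => g (T^[j] x)) μ := fun j =>
    (hT.iterate j).integrable_comp_of_integrable hg
  simp only [birkhoffSum]
  rw [integral_finsetSum _ fun j _ => hi j]
  simp [integral_iterate]

variable [PseudoMetricSpace X] [IsProbabilityMeasure μ] {α : Type*} [Fintype α]
  [MeasurableSpace α] [MeasurableSingletonClass α] {P : X → α} {U : Set X} {ε : ℝ} {N m : ℕ}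

/-- Two samples whose codes differ in more places than they leave `U` must separate inside `U`. -/
lemma exists_separated_finset_of_half_le [DecidableEq α] (hT : Measurable T) (hP : Measurable P)
    (hU : ∀ x ∈ U, ∀ y ∈ U, dist x y < ε → P x = P y) {S : Set (ℕ → X)}
    (hS : 1 / 2 ≤ (Measure.infinitePi fun _ : ℕ => μ).real S) {c r b : ℝ}
    (hc : ∀ ω ∈ S, c ≤ ∑ i ∈ Finset.range N, information μ (itinerary T P m) (ω i))
    (hr : ∀ ω ∈ S, ∑ i ∈ Finset.range N, birkhoffSum T (Uᶜ.indicator 1) m (ω i) ≤ r) (hr0 : 0 ≤ r)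
    (hb : ∀ v : Fin N × Fin m → α, (#{w | (hammingDist v w : ℝ) ≤ 2 * r} : ℝ) ≤ b) :
    ∃ Ω : Finset (ℕ → X), (Ω : Set (ℕ → X)) ⊆ S ∧ Real.exp c ≤ 2 * (#Ω * b) ∧
      (Ω : Set (ℕ → X)).Pairwise fun ω ω' =>
        ∃ q, ε ≤ dist (orbitArray T N m ω q) (orbitArray T N m ω' q) := by
  classical
  let code (ω : ℕ → X) (q : Fin N × Fin m) : α := P (orbitArray T N m ω q)
  have hcount := infinitePi_mul_exp_le_ncard_image (code := code) (measurable_itinerary hT hP m)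
    (fun ω ω' h i hi => funext fun j => congrFun h (⟨i, hi⟩, j)) hc
  rw [ncard_eq_toFinset_card _ (toFinite _)] at hcount
  obtain ⟨V, hV, hVsep, hVcard⟩ := exists_pairwise_not_card_le_card_mul
    (toFinite (code '' S)).toFinset (fun v w => (hammingDist v w : ℝ) ≤ 2 * r)
    (fun v => by simpa using hr0) (fun v w h => by rwa [hammingDist_comm]) (b := b) fun v _ =>
      (hb v).trans' <| Nat.cast_le.2 <| Finset.card_le_card <|
        Finset.filter_subset_filter _ (Finset.subset_univ _)
  obtain ⟨Ω, hΩS, hinj, hΩV⟩ := Finset.exists_subset_injOn_image_eq_of_surjOn S V (f := code)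
    fun v hv => by simpa using hV hv
  refine ⟨Ω, hΩS, ?_, fun ω hω ω' hω' hne => ?_⟩
  · rw [← Finset.card_image_of_injOn hinj, hΩV]
    linarith [mul_le_mul_of_nonneg_right hS (Real.exp_pos c).le]
  · by_contra! hclose
    have hdist := hammingDist_comp_le_sum_indicator_compl (P := P) (U := U)
      fun q hq hq' => hU _ hq _ hq' (hclose q)
    rw [sum_orbitArray, sum_orbitArray] at hdist
    refine hVsep ?_ ?_ (fun h => hne (hinj hω hω' h)) (hdist.trans ?_)
    · exact hΩV ▸ Finset.mem_image_of_mem code hω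
    · exact hΩV ▸ Finset.mem_image_of_mem code hω'
    · linarith [hr ω (hΩS hω), hr ω' (hΩS hω')]

variable [CompactSpace X] [BorelSpace X]

lemma eventually_half_le_infinitePi_typical (hT : MeasurePreserving T μ μ) (hP : Measurable P)
    (hU : MeasurableSet U) (F : Finset C(X, ℝ)) (m : ℕ) {τ : ℝ} (hτ : 0 < τ) :
    ∀ᶠ N : ℕ in atTop, 1 / 2 ≤ (Measure.infinitePi fun _ : ℕ => μ).real
      {ω | N * (shannonEntropy μ (itinerary T P m) - τ) ≤
          ∑ i ∈ Finset.range N, information μ (itinerary T P m) (ω i) ∧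
        ∑ i ∈ Finset.range N, birkhoffSum T (Uᶜ.indicator 1) m (ω i) ≤
          N * (m * μ.real Uᶜ + τ) ∧
        ∀ f ∈ F, |∑ i ∈ Finset.range N, birkhoffSum T f m (ω i) - N * (m * ∫ x, f x ∂μ)| ≤
          N * τ} := by
  classical
  have hitin := measurable_itinerary hT.measurable hP m
  have hfi : ∀ f : C(X, ℝ), Integrable f μ := fun f =>
    (BoundedContinuousFunction.mkOfCompact f).integrable μ
  have hexitm : Measurable (Uᶜ.indicator (1 : X → ℝ)) := measurable_one.indicator hU.compl
  have hexit : Integrable (Uᶜ.indicator (1 : X → ℝ)) μ := (integrable_const 1).indicator hU.compl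
  have hlln := eventually_half_le_infinitePi_abs_sum_sub_le (μ := μ)
    (insert (information μ (itinerary T P m)) (insert (birkhoffSum T (Uᶜ.indicator 1) m)
      (F.image fun f : C(X, ℝ) => birkhoffSum T f m))) (by
      simpa using ⟨measurable_information hitin, measurable_birkhoffSum hT.measurable hexitm m,
        fun f _ => measurable_birkhoffSum hT.measurable f.continuous.measurable m⟩) (by
      simpa using ⟨integrable_information hitin, integrable_birkhoffSum hT hexit m,
        fun f _ => integrable_birkhoffSum hT (hfi f) m⟩) hτ
  simp only [Finset.forall_mem_insert, Finset.forall_mem_image, integral_information hitin,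
    integral_birkhoffSum hT hexit, integral_indicator_one hU.compl] at hlln
  filter_upwards [hlln] with N hN
  refine hN.trans (measureReal_mono ?_)
  rintro ω ⟨hinfo, hexits, hF⟩
  refine ⟨by linarith [(abs_le.1 hinfo).1], by linarith [(abs_le.1 hexits).2], fun f hf => ?_⟩
  simpa only [integral_birkhoffSum hT (hfi f)] using hF hf

theorem eventually_exists_separated_samples (hT : MeasurePreserving T μ μ) (hP : Measurable P)
    {η : ℝ} (hη : 0 < η) :
    ∃ ε > 0, ∀ m > 0, ∀ (F : Finset C(X, ℝ)) (δ : ℝ), 0 < δ → ∀ᶠ N : ℕ in atTop,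
      ∃ Ω : Finset (ℕ → X),
        Real.exp (N * (shannonEntropy μ (itinerary T P m) - 3 * (m * η))) ≤ #Ω ∧
        ((Ω : Set (ℕ → X)).Pairwise fun ω ω' =>
          ∃ q, ε ≤ dist (orbitArray T N m ω q) (orbitArray T N m ω' q)) ∧
        ∀ ω ∈ Ω, ∀ f ∈ F,
          |∑ i ∈ Finset.range N, birkhoffSum T f m (ω i) - N * (m * ∫ x, f x ∂μ)| ≤ N * δ := by
  classical
  obtain ⟨κ, hκ, hball⟩ := exists_card_hammingBall_le_exp α hη
  obtain ⟨U, hUm, hUμ, ε, hε, hU⟩ := exists_measureReal_compl_le_forall_dist_lt_imp_eq μ hP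
    (show 0 < κ / 4 by positivity)
  refine ⟨ε, hε, fun m hm F δ hδ => ?_⟩
  have hm' : (0 : ℝ) < m := by exact_mod_cast hm
  set τ := min δ (min (m * η) (m * (κ / 4)))
  have hτη : τ ≤ m * η := (min_le_right _ _).trans (min_le_left _ _)
  have hτκ : τ ≤ m * (κ / 4) := (min_le_right _ _).trans (min_le_right _ _)
  have hτ : 0 < τ := lt_min hδ (lt_min (by positivity) (by positivity))
  filter_upwards [eventually_half_le_infinitePi_typical hT hP hUm F m hτ,
    (tendsto_natCast_atTop_atTop.atTop_mul_const (mul_pos hm' hη)).eventually_ge_atTop 1]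
    with N hN hNη
  have hexits : N * (m * μ.real Uᶜ + τ) ≤ κ * (N * m) / 2 := by
    have : (N : ℝ) * (m * μ.real Uᶜ + τ) ≤ N * (m * (κ / 4) + m * (κ / 4)) := by gcongr
    linarith
  obtain ⟨Ω, hΩ, hcard, hsep⟩ := exists_separated_finset_of_half_le hT.measurable hP hU hN
    (fun ω hω => hω.1) (fun ω hω => hω.2.1.trans hexits) (by positivity)
    (b := Real.exp (N * (m * η))) fun v => by
      simpa [mul_div_cancel₀, mul_comm η, mul_assoc] using hball (Fin N × Fin m) v
  refine ⟨Ω, ?_, hsep, fun ω hω f hf => ((hΩ hω).2.2 f hf).trans ?_⟩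
  · have two_le : 2 ≤ Real.exp (N * (m * η)) := by linarith [Real.add_one_le_exp (N * (m * η))]
    have loss : N * (shannonEntropy μ (itinerary T P m) - 3 * (m * η)) + N * (m * η) + N * (m * η) ≤
        N * (shannonEntropy μ (itinerary T P m) - τ) := by
      linarith [mul_le_mul_of_nonneg_left hτη (Nat.cast_nonneg (α := ℝ) N)]
    have := (Real.exp_le_exp.2 loss).trans
      (hcard.trans (mul_le_mul_of_nonneg_right two_le (by positivity)))
    rw [Real.exp_add, Real.exp_add] at this
    exact le_of_mul_le_mul_right (le_of_mul_le_mul_right (this.trans_eq (by ring))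
      (Real.exp_pos (N * (m * η)))) (Real.exp_pos _)
  · gcongr
    exact min_le_left _ _

end SeparatedSamples

/-! ### Gluing orbit segments -/

section Gluing

variable [PseudoMetricSpace X] {T : X → X} {ε : ℝ} {M : ℕ}

/-- The specification property at a single scale `ε`, with gap `M`. -/
def SpecificationAt (T : X → X) (ε : ℝ) (M : ℕ) : Prop :=
  ∀ k : ℕ, 2 ≤ k → ∀ x : ℕ → X, ∀ a b : ℕ → ℕ,
    (∀ i < k, a i ≤ b i) →
    (∀ i, i + 1 < k → b i + M ≤ a (i + 1)) →
    ∃ y : X, ∀ i < k, ∀ n ≤ b i - a i, dist (T^[a i + n] y) (T^[n] (x i)) < ε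

lemma SpecificationAt.exists_append (h : SpecificationAt T ε M) (L t p : ℕ) (z : X) (e : ℕ → X) :
    ∃ y, (∀ n < t, dist (T^[n] y) (T^[n] z) < ε) ∧
      ∀ q < p, ∀ n < L, dist (T^[t + (M + L) * q + (M + n)] y) (T^[n] (e q)) < ε := by
  let a : ℕ → ℕ := fun | 0 => 0 | q + 1 => t + (M + L) * q + M
  let b : ℕ → ℕ := fun | 0 => t - 1 | q + 1 => t + (M + L) * q + M + (L - 1)
  obtain ⟨y, hy⟩ := h (p + 2) (by omega) (fun | 0 => z | q + 1 => e q) a b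
    (by rintro (_ | q) - <;> simp only [a, b] <;> omega)
    (by rintro (_ | q) - <;> simp only [a, b, mul_zero, mul_add_one] <;> omega)
  refine ⟨y, fun n hn => ?_, fun q hq n hn => ?_⟩
  · simpa only [a, zero_add] using hy 0 (by omega) n (by simp only [a, b]; omega)
  · simpa only [a, add_assoc] using hy (q + 1) (by omega) n (by simp only [a, b]; omega)

lemma mem_bowenBall_of_shadow {x x' e e' : X} {n t L : ℕ} {δ : ℝ} (h : x' ∈ bowenBall T x n δ)
    (ht : t + (M + L) ≤ n) (hx : ∀ j < L, dist (T^[t + (M + j)] x) (T^[j] e) ≤ ε)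
    (hx' : ∀ j < L, dist (T^[t + (M + j)] x') (T^[j] e') ≤ ε) :
    e' ∈ bowenBall T e L (δ + 2 * ε) := by
  intro j hj
  have htri := dist_triangle4 (T^[j] e) (T^[t + (M + j)] x) (T^[t + (M + j)] x') (T^[j] e')
  rw [dist_comm (T^[j] e) (T^[t + (M + j)] x)] at htri
  linarith [h (t + (M + j)) (by omega), hx j hj, hx' j hj]

lemma exists_glued_finset (hspec : SpecificationAt T ε M) {N m : ℕ} {Ω : Finset (ℕ → X)} {r : ℝ}
    (hr : 2 * ε < r) (hΩ : (Ω : Set (ℕ → X)).Pairwise fun ω ω' =>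
      ∃ q, r ≤ dist (orbitArray T N m ω q) (orbitArray T N m ω' q)) :
    ∃ E : Finset X, #E = #Ω ∧
      ((E : Set X).Pairwise fun x y => y ∉ bowenBall T x ((M + m) * N) (r - 2 * ε)) ∧
      ∀ x ∈ E, ∃ ω ∈ Ω, ∀ i < N, ∀ j < m,
        dist (T^[(M + m) * i + (M + j)] x) (T^[j] (ω i)) < ε := by
  classical
  choose y _ hy using fun ω : ℕ → X => hspec.exists_append m 0 N (ω 0) ω
  simp only [zero_add] at hy
  have hsep : (Ω : Set (ℕ → X)).Pairwise fun ω ω' =>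
      y ω' ∉ bowenBall T (y ω) ((M + m) * N) (r - 2 * ε) := by
    intro ω hω ω' hω' hne hmem
    obtain ⟨⟨i, j⟩, hq⟩ := hΩ hω hω' hne
    have hle : (M + m) * i + (M + m) ≤ (M + m) * N := by
      rw [← mul_add_one]
      exact Nat.mul_le_mul_left _ i.2
    have hlt := mem_bowenBall_of_shadow hmem hle (fun j hj => (hy ω i i.2 j hj).le)
      (fun j hj => (hy ω' i i.2 j hj).le) j j.2
    simp only [orbitArray] at hq
    linarith
  refine ⟨Ω.image y, Finset.card_image_of_injOn fun ω hω ω' hω' hyy => ?_, ?_, ?_⟩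
  · by_contra hne
    exact hsep hω hω' hne (hyy ▸ fun j _ => by simpa using hr)
  · rw [Finset.coe_image]
    rintro _ ⟨ω, hω, rfl⟩ _ ⟨ω', hω', rfl⟩ hne
    exact hsep hω hω' (ne_of_apply_ne y hne)
  · exact Finset.forall_mem_image.2 fun ω hω => ⟨ω, hω, hy ω⟩

end Gluing

section GluedSums

variable {T : X → X} {f : X → ℝ} {C I δ : ℝ}

lemma birkhoffSum_mul {E : Type*} [AddCommMonoid E] (T : X → X) (g : X → E) (m N : ℕ) (x : X) :
    birkhoffSum T g (m * N) x = ∑ i ∈ Finset.range N, birkhoffSum T g m (T^[m * i] x) := by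
  simp only [birkhoffSum, sum_range_mul_eq_sum_sum, ← Function.iterate_add_apply, add_comm]

lemma abs_birkhoffSum_sub_mul_le (hC : ∀ x, |f x| ≤ C) (hI : |I| ≤ C) (n : ℕ) (x : X) :
    |birkhoffSum T f n x - n * I| ≤ n * (2 * C) := by
  have : birkhoffSum T f n x - n * I = ∑ j ∈ Finset.range n, (f (T^[j] x) - I) := by
    simp [birkhoffSum]
  rw [this]
  refine (Finset.abs_sum_le_sum_abs _ _).trans
    ((Finset.sum_le_card_nsmul _ _ (2 * C) fun j _ => ?_).trans_eq (by simp))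
  linarith [abs_sub (f (T^[j] x)) I, hC (T^[j] x)]

variable [PseudoMetricSpace X] {ε : ℝ} {M L N : ℕ}

lemma abs_birkhoffSum_gap_add_sub_le (hC : ∀ x, |f x| ≤ C) (hI : |I| ≤ C)
    (hosc : ∀ a b, dist a b ≤ ε → |f a - f b| ≤ δ) {x e : X}
    (hx : ∀ j < L, dist (T^[M + j] x) (T^[j] e) ≤ ε) :
    |birkhoffSum T f (M + L) x - (M * I + birkhoffSum T f L e)| ≤ M * (2 * C) + L * δ := by
  have hshadow : |birkhoffSum T f L (T^[M] x) - birkhoffSum T f L e| ≤ L * δ := by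
    rw [birkhoffSum, birkhoffSum, ← Finset.sum_sub_distrib]
    refine (Finset.abs_sum_le_sum_abs _ _).trans
      ((Finset.sum_le_card_nsmul _ _ δ fun j hj => hosc _ _ ?_).trans_eq (by simp))
    rw [← Function.iterate_add_apply, add_comm]
    exact hx j (Finset.mem_range.1 hj)
  calc |birkhoffSum T f (M + L) x - (M * I + birkhoffSum T f L e)|
      = |(birkhoffSum T f M x - M * I) +
          (birkhoffSum T f L (T^[M] x) - birkhoffSum T f L e)| := by
        rw [birkhoffSum_add]; ring_nf
    _ ≤ M * (2 * C) + L * δ :=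
        (abs_add_le _ _).trans (add_le_add (abs_birkhoffSum_sub_mul_le hC hI M x) hshadow)

lemma abs_birkhoffSum_glued_sub_le (hC : ∀ x, |f x| ≤ C) (hI : |I| ≤ C)
    (hosc : ∀ a b, dist a b ≤ ε → |f a - f b| ≤ δ) {x : X} {ω : ℕ → X}
    (hx : ∀ i < N, ∀ j < L, dist (T^[(M + L) * i + (M + j)] x) (T^[j] (ω i)) ≤ ε) :
    |birkhoffSum T f ((M + L) * N) x - ((M + L) * N : ℕ) * I| ≤
      |∑ i ∈ Finset.range N, birkhoffSum T f L (ω i) - N * (L * I)| +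
        N * (M * (2 * C) + L * δ) := by
  have hblocks : |∑ i ∈ Finset.range N, (birkhoffSum T f (M + L) (T^[(M + L) * i] x) -
      (M * I + birkhoffSum T f L (ω i)))| ≤ N * (M * (2 * C) + L * δ) := by
    refine (Finset.abs_sum_le_sum_abs _ _).trans
      ((Finset.sum_le_card_nsmul _ _ _ fun i hi =>
        abs_birkhoffSum_gap_add_sub_le hC hI hosc fun j hj => ?_).trans_eq
        (by rw [Finset.card_range, nsmul_eq_mul]))
    rw [← Function.iterate_add_apply, add_comm]
    exact hx i (Finset.mem_range.1 hi) j hj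
  rw [birkhoffSum_mul]
  refine (le_of_eq ?_).trans ((abs_add_le _ _).trans (add_le_add_right hblocks _))
  rw [Finset.sum_sub_distrib, Finset.sum_add_distrib]
  push_cast
  simp only [Finset.sum_const, Finset.card_range, nsmul_eq_mul]
  ring_nf

end GluedSums

section SeparatedApproximation

lemma abs_integral_continuousMap_le_norm [TopologicalSpace X] [CompactSpace X]
    [MeasurableSpace X] (μ : Measure X) [IsProbabilityMeasure μ] (f : C(X, ℝ)) :
    |∫ x, f x ∂μ| ≤ ‖f‖ := by
  simpa using norm_integral_le_of_norm_le_const (μ := μ) (ae_of_all _ f.norm_coe_le_norm)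

variable [PseudoMetricSpace X] [CompactSpace X]

lemma eventually_forall_dist_le_abs_sub_le (f : C(X, ℝ)) {δ : ℝ} (hδ : 0 < δ) :
    ∀ᶠ ε in 𝓝[>] (0 : ℝ), ∀ a b, dist a b ≤ ε → |f a - f b| ≤ δ := by
  obtain ⟨ρ, hρ, hf⟩ := Metric.uniformContinuous_iff.1
    (CompactSpace.uniformContinuous_of_continuous f.continuous) δ hδ
  filter_upwards [Ioo_mem_nhdsGT hρ] with ε hε a b hab
  exact (hf (hab.trans_lt hε.2)).le

variable [MeasurableSpace X]

/-- Arbitrarily long, exponentially large families of `ε`-separated orbit segments that approximate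
`μ`: the growth rate is `h`, and the approximation is tested on finitely many functions. -/
def HasSeparatedApproximation (T : X → X) (μ : Measure X) (h ε : ℝ) : Prop :=
  ∀ (F : Finset C(X, ℝ)) (δ : ℝ), 0 < δ → ∀ n₀ : ℕ, ∃ n ≥ n₀, ∃ E : Finset X,
    ((E : Set X).Pairwise fun x y => y ∉ bowenBall T x n ε) ∧ Real.exp (n * h) ≤ #E ∧
    ∀ x ∈ E, ∀ f ∈ F, |birkhoffSum T f n x - n * ∫ y, f y ∂μ| ≤ n * δ

variable [BorelSpace X] {T : X → X} {μ : Measure X} [IsProbabilityMeasure μ]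

theorem exists_hasSeparatedApproximation_of_lt_ksEntropy (hspec : SpecificationProperty T)
    (hμ : MeasurePreserving T μ μ) {h : ℝ≥0} (hh : h < ksEntropy T μ) :
    ∃ ε > 0, HasSeparatedApproximation T μ h ε := by
  obtain ⟨c, hhc, hc⟩ := ENNReal.lt_iff_exists_nnreal_btwn.1 hh
  rw [ENNReal.coe_lt_coe, ← NNReal.coe_lt_coe] at hhc
  obtain ⟨K, P, hP, hentropy⟩ := exists_le_shannonEntropy_of_lt_ksEntropy hc
  obtain ⟨η, hη, hcη⟩ : ∃ η > 0, (c : ℝ) = h + 4 * η := ⟨(c - h) / 4, by linarith, by ring⟩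
  obtain ⟨r, hr, hsamples⟩ := eventually_exists_separated_samples hμ hP hη
  refine ⟨r / 2, by positivity, fun F δ hδ n₀ => ?_⟩
  have hmod : ∀ᶠ ε in 𝓝[>] (0 : ℝ), ∀ f ∈ F, ∀ a b, dist a b ≤ ε → |f a - f b| ≤ δ / 4 :=
    F.eventually_all.2 fun f _ => eventually_forall_dist_le_abs_sub_le f (by positivity)
  obtain ⟨ε, hosc, hε, hεr⟩ := (hmod.and (Ioo_mem_nhdsGT (show 0 < r / 4 by positivity))).exists
  obtain ⟨M, -, hM⟩ := hspec ε hε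
  have hlarge : ∀ a b : ℝ, 0 < b → ∀ᶠ m : ℕ in atTop, a ≤ m * b := fun a b hb =>
    (tendsto_natCast_atTop_atTop.atTop_mul_const hb).eventually_ge_atTop a
  obtain ⟨m, hm, hmc, hMh, hMF⟩ := ((eventually_gt_atTop 0).and (hentropy.and
    ((hlarge (M * h) η hη).and (F.eventually_all.2 fun f _ =>
      hlarge (M * (2 * ‖f‖)) (δ / 4) (by positivity))))).exists
  obtain ⟨N, hN, Ω, hcard, hΩ, htyp⟩ := ((eventually_ge_atTop n₀).and
    (hsamples m hm F (m * (δ / 4)) (by positivity))).exists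
  obtain ⟨E, hEcard, hsep, hshadow⟩ := exists_glued_finset hM (by linarith) hΩ
  refine ⟨(M + m) * N, hN.trans (Nat.le_mul_of_pos_left N (by omega)), E,
    fun x hx y hy hne hmem => hsep hx hy hne fun j hj => (hmem j hj).trans_le (by linarith),
    ?_, fun x hx f hf => ?_⟩
  · rw [hEcard]
    refine le_trans (Real.exp_le_exp.2 ?_) hcard
    rw [hcη] at hmc
    push_cast
    rw [mul_right_comm, mul_comm _ (N : ℝ)]
    gcongr
    linarith
  · obtain ⟨ω, hω, hx⟩ := hshadow x hx
    have hsum := abs_birkhoffSum_glued_sub_le f.norm_coe_le_norm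
      (abs_integral_continuousMap_le_norm μ f) (hosc f hf) fun i hi j hj => (hx i hi j hj).le
    have hgap : (N : ℝ) * (M * (2 * ‖f‖)) ≤ N * (m * (δ / 4)) :=
      mul_le_mul_of_nonneg_left (hMF f hf) N.cast_nonneg
    have : (0 : ℝ) ≤ N * (m * δ) + 4 * (N * (M * δ)) := by positivity
    push_cast at hsum ⊢
    linarith [htyp ω hω f hf]

end SeparatedApproximation

/-! ### Concatenating blocks -/

section Blocks

open scoped Asymptotics

/-- The starting time of the `i`-th of consecutive blocks of lengths `w 0, w 1, …`. A block that
consists of a gap of length `a i` and an orbit segment of length `b i` has length `(a + b) i`. -/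
def blockStart (w : ℕ → ℕ) (i : ℕ) : ℕ := ∑ j ∈ Finset.range i, w j

lemma blockStart_succ (w : ℕ → ℕ) (i : ℕ) : blockStart w (i + 1) = blockStart w i + w i :=
  Finset.sum_range_succ _ _

lemma monotone_blockStart (w : ℕ → ℕ) : Monotone (blockStart w) :=
  monotone_nat_of_le_succ fun i => blockStart_succ w i ▸ Nat.le_add_right _ _

lemma blockStart_add_of_eq {w : ℕ → ℕ} {c q v : ℕ} (h : ∀ l < q, w (c + l) = v) :
    blockStart w (c + q) = blockStart w c + v * q := by
  rw [blockStart, Finset.sum_range_add,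
    Finset.sum_congr rfl fun l hl => h l (Finset.mem_range.1 hl)]
  simp [blockStart, mul_comm]

variable {w : ℕ → ℕ}

lemma le_blockStart (hw : ∀ i, 0 < w i) (n : ℕ) : n ≤ blockStart w n := by
  simpa [blockStart] using Finset.card_nsmul_le_sum (Finset.range n) w 1 fun i _ => hw i

lemma exists_blockStart_le_lt (hw : ∀ i, 0 < w i) :
    ∃ ι : ℕ → ℕ, Tendsto ι atTop atTop ∧
      ∀ n, blockStart w (ι n) ≤ n ∧ n < blockStart w (ι n + 1) := by
  have hex : ∀ n, ∃ i, n < blockStart w (i + 1) := fun n => ⟨n, le_blockStart hw (n + 1)⟩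
  classical
  have hlt : ∀ n, n < blockStart w (Nat.find (hex n) + 1) := fun n => Nat.find_spec (hex n)
  refine ⟨fun n => Nat.find (hex n), tendsto_atTop.2 fun i => ?_, fun n => ⟨?_, hlt n⟩⟩
  · filter_upwards [eventually_ge_atTop (blockStart w i)] with n hn
    exact Nat.le_of_lt_succ ((monotone_blockStart w).reflect_lt (hn.trans_lt (hlt n)))
  · change blockStart w (Nat.find (hex n)) ≤ n
    rcases h : Nat.find (hex n) with _ | i
    · exact Nat.zero_le n
    · exact not_lt.1 (Nat.find_min (hex n) (by omega))

lemma isLittleO_sum_range_blockStart {E : Type*} [NormedAddCommGroup E] {u : ℕ → E}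
    (hw : ∀ i, 0 < w i) (hu : u =o[atTop] fun i => (w i : ℝ)) :
    (fun i => ∑ j ∈ Finset.range i, u j) =o[atTop] fun i => (blockStart w i : ℝ) := by
  simp only [blockStart, Nat.cast_sum]
  refine hu.sum_range (fun i => (w i).cast_nonneg) (tendsto_atTop_mono (fun n => ?_)
    tendsto_natCast_atTop_atTop)
  exact_mod_cast le_blockStart hw n

lemma isLittleO_natCast_of_mul_le {ι : Type*} {l : Filter ι} {κ u v : ι → ℕ}
    (hκ : Tendsto κ l atTop) (h : ∀ i, κ i * u i ≤ v i) :
    (fun i => (u i : ℝ)) =o[l] fun i => (v i : ℝ) := by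
  refine Asymptotics.isLittleO_iff.2 fun c hc => ?_
  filter_upwards [(tendsto_natCast_atTop_atTop.comp hκ).eventually_ge_atTop (1 / c)] with i hi
  rw [Function.comp_apply, div_le_iff₀' hc] at hi
  rw [Real.norm_natCast, Real.norm_natCast]
  calc (u i : ℝ) ≤ c * κ i * u i := le_mul_of_one_le_left (Nat.cast_nonneg _) hi
    _ = c * (κ i * u i : ℕ) := by push_cast; ring
    _ ≤ c * v i := by gcongr; exact h i

lemma exists_slow_reparametrization (hw : ∀ k, 0 < w k) :
    ∃ κ : ℕ → ℕ, Monotone κ ∧ Tendsto κ atTop atTop ∧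
      (fun i => (w (κ i) : ℝ)) =o[atTop] fun i => (blockStart (w ∘ κ) i : ℝ) := by
  let κ : ℕ → ℕ := fun i => Nat.findGreatest (fun k => k * w k ≤ i) i
  have hκ : Tendsto κ atTop atTop := tendsto_atTop.2 fun k => by
    filter_upwards [eventually_ge_atTop k, eventually_ge_atTop (k * w k)] with i hki hwi
    exact Nat.le_findGreatest hki hwi
  refine ⟨κ, fun i j hij => Nat.findGreatest_mono (fun k hk => le_trans hk hij) hij, hκ,
    isLittleO_natCast_of_mul_le hκ fun i => ?_⟩
  exact (Nat.findGreatest_spec (P := fun k => k * w k ≤ i) i.zero_le (by simp)).trans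
    (le_blockStart (fun _ => hw _) i)

variable {a b : ℕ → ℕ}

lemma eventually_mul_blockStart_succ_le {s h : ℝ} (hs : 0 ≤ s) (hsh : s < h)
    (hpos : ∀ i, 0 < (a + b) i)
    (hgap : (fun i => (a i : ℝ)) =o[atTop] fun i => ((a + b) i : ℝ))
    (hslow : (fun i => ((a + b) i : ℝ)) =o[atTop] fun i => (blockStart (a + b) i : ℝ)) :
    ∀ᶠ j in atTop, s * blockStart (a + b) (j + 1) ≤ ∑ i ∈ Finset.range j, b i * h := by
  obtain ⟨c, hc, hcs⟩ : ∃ c > 0, s * (1 + c) = (1 - c) * h :=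
    ⟨(h - s) / (h + s), div_pos (by linarith) (by linarith), by
      have : h + s ≠ 0 := by linarith
      field_simp
      ring⟩
  filter_upwards [(isLittleO_sum_range_blockStart hpos hgap).bound hc, hslow.bound hc] with j ha hj
  simp only [Real.norm_natCast] at ha hj
  have hsum : (blockStart (a + b) j : ℝ) =
      ∑ i ∈ Finset.range j, (a i : ℝ) + ∑ i ∈ Finset.range j, (b i : ℝ) := by
    simp [blockStart, Finset.sum_add_distrib]
  have hlast : (blockStart (a + b) (j + 1) : ℝ) ≤ (1 + c) * blockStart (a + b) j := by
    rw [blockStart_succ, Nat.cast_add]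
    linarith
  have hb : (1 - c) * blockStart (a + b) j ≤ ∑ i ∈ Finset.range j, (b i : ℝ) := by
    linarith [(le_abs_self _).trans ha]
  calc s * blockStart (a + b) (j + 1) ≤ s * ((1 + c) * blockStart (a + b) j) := by gcongr
    _ = (1 - c) * blockStart (a + b) j * h := by rw [← mul_assoc, hcs]; ring
    _ ≤ (∑ i ∈ Finset.range j, (b i : ℝ)) * h := by gcongr; linarith
    _ = _ := Finset.sum_mul _ _ _

end Blocks

section BlockAverages

variable {T : X → X} {w : ℕ → ℕ} {f : X → ℝ} {C I : ℝ} {x : X}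

lemma birkhoffSum_blockStart_sub_mul (T : X → X) (f : X → ℝ) (w : ℕ → ℕ) (I : ℝ) (x : X) (i : ℕ) :
    birkhoffSum T f (blockStart w i) x - blockStart w i * I =
      ∑ l ∈ Finset.range i, (birkhoffSum T f (w l) (T^[blockStart w l] x) - w l * I) := by
  induction i with
  | zero => simp [blockStart]
  | succ i ih =>
    rw [Finset.sum_range_succ, ← ih, blockStart_succ, birkhoffSum_add]
    push_cast
    ring

open scoped Asymptotics

lemma tendsto_birkhoffAverage_of_blocks (hw : ∀ i, 0 < w i)
    (hslow : (fun i => (w i : ℝ)) =o[atTop] fun i => (blockStart w i : ℝ))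
    (hC : ∀ x, |f x| ≤ C) (hI : |I| ≤ C)
    (hblock : (fun i => birkhoffSum T f (w i) (T^[blockStart w i] x) - w i * I) =o[atTop]
      fun i => (w i : ℝ)) :
    Tendsto (birkhoffAverage ℝ T f · x) atTop (𝓝 I) := by
  obtain ⟨ι, hι, hιn⟩ := exists_blockStart_le_lt hw
  have hstart : (fun n => (blockStart w (ι n) : ℝ)) =O[atTop] fun n : ℕ => (n : ℝ) :=
    .of_bound 1 (.of_forall fun n => by simpa using (hιn n).1)
  have hfull : (fun n => birkhoffSum T f (blockStart w (ι n)) x - blockStart w (ι n) * I)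
      =o[atTop] fun n : ℕ => (n : ℝ) := by
    simp only [birkhoffSum_blockStart_sub_mul]
    exact ((isLittleO_sum_range_blockStart hw hblock).comp_tendsto hι).trans_isBigO hstart
  have hrest : (fun n => birkhoffSum T f (n - blockStart w (ι n)) (T^[blockStart w (ι n)] x) -
      (n - blockStart w (ι n) : ℕ) * I) =o[atTop] fun n : ℕ => (n : ℝ) := by
    refine Asymptotics.IsBigO.trans_isLittleO (.of_bound (2 * C) (.of_forall fun n => ?_))
      ((hslow.comp_tendsto hι).trans_isBigO hstart)
    have hlen : n - blockStart w (ι n) ≤ w (ι n) := by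
      have := (hιn n).2
      rw [blockStart_succ] at this
      omega
    have hC0 : 0 ≤ 2 * C := by linarith [(abs_nonneg I).trans hI]
    rw [Function.comp_apply, Real.norm_natCast, mul_comm (2 * C)]
    exact (abs_birkhoffSum_sub_mul_le hC hI _ _).trans (by gcongr)
  refine (tendsto_sub_nhds_zero_iff).1 ((hfull.add hrest).tendsto_div_nhds_zero.congr' ?_)
  filter_upwards [eventually_ne_atTop 0] with n hn
  rw [← add_sub_add_comm, ← add_mul, ← Nat.cast_add, ← birkhoffSum_add,
    Nat.add_sub_cancel' (hιn n).1, birkhoffAverage, smul_eq_mul]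
  field_simp

variable [PseudoMetricSpace X] [CompactSpace X]

lemma isLittleO_birkhoffSum_gap_add_sub {a b : ℕ → ℕ} {e : ℕ → X} {ρ : ℕ → ℝ} {f : C(X, ℝ)}
    (hI : |I| ≤ ‖f‖) {y : ℕ → X}
    (hgap : (fun i => (a i : ℝ)) =o[atTop] fun i => ((a + b) i : ℝ))
    (hρ : Tendsto ρ atTop (𝓝[>] 0))
    (hy : ∀ i, ∀ j < b i, dist (T^[a i + j] (y i)) (T^[j] (e i)) ≤ ρ i)
    (he : (fun i => birkhoffSum T f (b i) (e i) - b i * I) =o[atTop] fun i => ((a + b) i : ℝ)) :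
    (fun i => birkhoffSum T f ((a + b) i) (y i) - (a + b) i * I) =o[atTop]
      fun i => ((a + b) i : ℝ) := by
  have hshadow : (fun i => birkhoffSum T f ((a + b) i) (y i) -
      (a i * I + birkhoffSum T f (b i) (e i))) =o[atTop] fun i => ((a + b) i : ℝ) := by
    refine Asymptotics.isLittleO_iff.2 fun c hc => ?_
    filter_upwards [(hgap.const_mul_left (2 * ‖f‖)).bound (half_pos hc),
      hρ.eventually (eventually_forall_dist_le_abs_sub_le f (half_pos hc))] with i hgapi hosc
    have hle := abs_birkhoffSum_gap_add_sub_le f.norm_coe_le_norm hI hosc (hy i)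
    have hb : (b i : ℝ) ≤ (a + b) i := by simp
    rw [Real.norm_natCast] at hgapi ⊢
    calc _ ≤ 2 * ‖f‖ * a i + b i * (c / 2) := hle.trans_eq (by ring)
      _ ≤ c / 2 * (a + b) i + (a + b) i * (c / 2) :=
        add_le_add ((le_abs_self _).trans hgapi) (by gcongr)
      _ = c * (a + b) i := by ring
  refine (hshadow.add he).congr_left fun i => ?_
  simp only [Pi.add_apply, Nat.cast_add]
  ring

end BlockAverages

section Generic

open scoped Asymptotics

variable {T : X → X} {x : X} [TopologicalSpace X]

lemma isGeneric_iff_tendsto_birkhoffAverage [MeasurableSpace X] {μ : Measure X} :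
    IsGeneric T μ x ↔
      ∀ f : C(X, ℝ), Tendsto (birkhoffAverage ℝ T f · x) atTop (𝓝 (∫ y, f y ∂μ)) := by
  simp only [IsGeneric, birkhoffAverage, birkhoffSum, smul_eq_mul, div_eq_inv_mul]

variable [CompactSpace X]

lemma lipschitzWith_birkhoffAverage_eval (T : X → X) (x : X) (n : ℕ) :
    LipschitzWith 1 fun f : C(X, ℝ) => birkhoffAverage ℝ T f n x := by
  refine LipschitzWith.of_dist_le_mul fun f g => ?_
  have hsum : ‖birkhoffSum T (f - g) n x‖ ≤ n * ‖f - g‖ :=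
    (norm_sum_le_of_le _ fun j _ => (f - g).norm_coe_le_norm _).trans_eq (by simp)
  rw [dist_eq_norm, dist_eq_norm, NNReal.coe_one, one_mul, ← Pi.sub_apply, ← Pi.sub_apply,
    ← birkhoffAverage_sub, birkhoffAverage, norm_smul, norm_inv, Real.norm_natCast]
  exact inv_mul_le_of_le_mul₀ n.cast_nonneg (norm_nonneg _) hsum

variable [MeasurableSpace X] [BorelSpace X] {μ : Measure X} [IsProbabilityMeasure μ]

lemma lipschitzWith_integral_eval (μ : Measure X) [IsProbabilityMeasure μ] :
    LipschitzWith 1 fun f : C(X, ℝ) => ∫ y, f y ∂μ := by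
  refine LipschitzWith.of_dist_le_mul fun f g => ?_
  have hint : ∀ f : C(X, ℝ), Integrable f μ := fun f =>
    (BoundedContinuousFunction.mkOfCompact f).integrable μ
  rw [Real.dist_eq, ← integral_sub (hint f) (hint g), dist_eq_norm, NNReal.coe_one, one_mul]
  exact abs_integral_continuousMap_le_norm μ (f - g)

lemma isGeneric_of_denseRange {ι : Type*} {g : ι → C(X, ℝ)} (hg : DenseRange g)
    (h : ∀ l, Tendsto (birkhoffAverage ℝ T (g l) · x) atTop (𝓝 (∫ y, g l y ∂μ))) :
    IsGeneric T μ x :=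
  isGeneric_iff_tendsto_birkhoffAverage.2 fun f => hg.induction_on f
    ((LipschitzWith.uniformEquicontinuous _ 1
      (lipschitzWith_birkhoffAverage_eval T x)).equicontinuous.isClosed_setOfPred_tendsto
        (lipschitzWith_integral_eval μ).continuous) h

end Generic

section Shadowing

variable [PseudoMetricSpace X] {T : X → X} {r : ℕ → ℝ} {a b : ℕ → ℕ} {κ : ℕ → ℕ}

lemma exists_forall_lt_iff_lt (hκ : Monotone κ) (hκt : Tendsto κ atTop atTop) (k : ℕ) :
    ∃ c, ∀ i, i < c ↔ κ i < k := by
  have hex : ∃ c, k ≤ κ c := (hκt.eventually_ge_atTop k).exists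
  classical
  exact ⟨Nat.find hex, fun i => ⟨fun hi => not_le.1 (Nat.find_min hex hi), fun hi =>
    lt_of_not_ge fun hle => hi.not_ge ((Nat.find_spec hex).trans (hκ hle))⟩⟩

-- Passing from level `k` to level `k + 1` costs an error `r k - r (k + 1)`; these telescope.
lemma exists_shadow_of_level_lt (hspec : ∀ k, SpecificationAt T (r k - r (k + 1)) (a k))
    (hκ : Monotone κ) (hκt : Tendsto κ atTop atTop) (e : ℕ → X) (k : ℕ) :
    ∃ z, ∀ i, κ i < k → ∀ j < b (κ i),
      dist (T^[blockStart ((a + b) ∘ κ) i + (a (κ i) + j)] z) (T^[j] (e i)) ≤ r (κ i) - r k := by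
  induction k with
  | zero => exact ⟨e 0, by simp⟩
  | succ k ih =>
    obtain ⟨z, hz⟩ := ih
    obtain ⟨c, hc⟩ := exists_forall_lt_iff_lt hκ hκt k
    obtain ⟨d, hd⟩ := exists_forall_lt_iff_lt hκ hκt (k + 1)
    have hlevel : ∀ q, c + q < d → κ (c + q) = k := fun q hq =>
      le_antisymm (Nat.le_of_lt_succ ((hd _).1 hq))
        (not_lt.1 fun hlt => absurd ((hc _).2 hlt) (by omega))
    obtain ⟨y, hyz, hye⟩ := (hspec k).exists_append (b k) (blockStart ((a + b) ∘ κ) c) (d - c) z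
      fun q => e (c + q)
    refine ⟨y, fun i hi j hj => ?_⟩
    rcases lt_or_ge i c with hic | hic
    · have hlt : blockStart ((a + b) ∘ κ) i + (a (κ i) + j) < blockStart ((a + b) ∘ κ) c :=
        calc _ < blockStart ((a + b) ∘ κ) (i + 1) := by
              rw [blockStart_succ, Function.comp_apply, Pi.add_apply]
              omega
          _ ≤ _ := monotone_blockStart _ hic
      linarith [dist_triangle (T^[blockStart ((a + b) ∘ κ) i + (a (κ i) + j)] y)
        (T^[blockStart ((a + b) ∘ κ) i + (a (κ i) + j)] z) (T^[j] (e i)), hyz _ hlt,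
        hz i ((hc i).1 hic) j hj]
    · obtain ⟨q, rfl⟩ := Nat.exists_eq_add_of_le hic
      have hq : c + q < d := (hd _).2 hi
      have hstart : blockStart ((a + b) ∘ κ) (c + q) =
          blockStart ((a + b) ∘ κ) c + (a k + b k) * q :=
        blockStart_add_of_eq fun l hl => congrArg (a + b) (hlevel l (by omega))
      rw [hlevel q hq] at hj
      rw [hstart, hlevel q hq]
      exact (hye q (by omega) j hj).le

theorem exists_shadow [CompactSpace X] (hT : Continuous T) (hr : ∀ k, 0 ≤ r k)
    (hspec : ∀ k, SpecificationAt T (r k - r (k + 1)) (a k))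
    (hκ : Monotone κ) (hκt : Tendsto κ atTop atTop) (e : ℕ → X) :
    ∃ z, ∀ i, ∀ j < b (κ i),
      dist (T^[blockStart ((a + b) ∘ κ) i + (a (κ i) + j)] z) (T^[j] (e i)) ≤ r (κ i) := by
  choose z hz using exists_shadow_of_level_lt (b := b) hspec hκ hκt e
  obtain ⟨y, φ, hφ, hy⟩ := CompactSpace.tendsto_subseq z
  refine ⟨y, fun i j hj => le_of_tendsto
    ((((hT.iterate _).tendsto y).comp hy).dist tendsto_const_nhds) ?_⟩
  filter_upwards [hφ.tendsto_atTop.eventually_gt_atTop (κ i)] with k hk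
  exact (hz (φ k) i hk j hj).trans (sub_le_self _ (hr _))

end Shadowing

/-! ### The lower bound -/

section LowerBound

open scoped Asymptotics

variable [PseudoMetricSpace X] [CompactSpace X] [MeasurableSpace X] [BorelSpace X]
  {T : X → X} {μ : Measure X} [IsProbabilityMeasure μ] {a b : ℕ → ℕ} {ρ : ℕ → ℝ}
  {g : ℕ → C(X, ℝ)} {h s ε : ℝ}

lemma isGeneric_of_shadow {e : ℕ → X} {x : X} (hg : DenseRange g) (hpos : ∀ i, 0 < (a + b) i)
    (hgap : (fun i => (a i : ℝ)) =o[atTop] fun i => ((a + b) i : ℝ))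
    (hslow : (fun i => ((a + b) i : ℝ)) =o[atTop] fun i => (blockStart (a + b) i : ℝ))
    (hρ : Tendsto ρ atTop (𝓝[>] 0))
    (hx : ∀ i, ∀ j < b i, dist (T^[blockStart (a + b) i + (a i + j)] x) (T^[j] (e i)) ≤ ρ i)
    (he : ∀ l, (fun i => birkhoffSum T (g l) (b i) (e i) - b i * ∫ y, g l y ∂μ) =o[atTop]
      fun i => (b i : ℝ)) :
    IsGeneric T μ x := by
  have hb : (fun i => (b i : ℝ)) =O[atTop] fun i => ((a + b) i : ℝ) :=
    .of_bound 1 (.of_forall fun i => by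
      simp only [Real.norm_natCast, one_mul, Nat.cast_le, Pi.add_apply, le_add_iff_nonneg_left,
        zero_le])
  refine isGeneric_of_denseRange hg fun l => tendsto_birkhoffAverage_of_blocks hpos hslow
    (g l).norm_coe_le_norm (abs_integral_continuousMap_le_norm μ (g l))
    (isLittleO_birkhoffSum_gap_add_sub (abs_integral_continuousMap_le_norm μ (g l)) hgap hρ
      (fun i j hj => ?_) ((he l).trans_isBigO hb))
  rw [← Function.iterate_add_apply, add_comm]
  exact hx i j hj

/-- The points shadowing a sequence of orbit segments from `E 0, E 1, …` form a Moran-type set,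
which carries the image of the uniform measure on `∏ i, E i`. -/
theorem exists_one_le_bowenH_isGeneric_of_blocks {E : ℕ → Finset X} (hs : 0 ≤ s) (hsh : s < h)
    (hg : DenseRange g) (hpos : ∀ i, 0 < (a + b) i)
    (hgap : (fun i => (a i : ℝ)) =o[atTop] fun i => ((a + b) i : ℝ))
    (hslow : (fun i => ((a + b) i : ℝ)) =o[atTop] fun i => (blockStart (a + b) i : ℝ))
    (hρ : Tendsto ρ atTop (𝓝[>] 0)) (hρε : ∀ i, ρ i ≤ ε / 4)
    (hshadow : ∀ e : ℕ → X, ∃ x, ∀ i, ∀ j < b i,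
      dist (T^[blockStart (a + b) i + (a i + j)] x) (T^[j] (e i)) ≤ ρ i)
    (hsep : ∀ i, (E i : Set X).Pairwise fun x y => y ∉ bowenBall T x (b i) ε)
    (hcard : ∀ i, Real.exp (b i * h) ≤ #(E i))
    (hE : ∀ e : ℕ → X, (∀ i, e i ∈ E i) → ∀ l,
      (fun i => birkhoffSum T (g l) (b i) (e i) - b i * ∫ y, g l y ∂μ) =o[atTop]
        fun i => (b i : ℝ)) :
    ∃ n₀, 1 ≤ bowenH T {x | IsGeneric T μ x} s (ε / 4) n₀ := by
  have hne : ∀ i, Nonempty (E i) := fun i => by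
    rw [Finset.nonempty_coe_sort, ← Finset.card_pos]
    exact_mod_cast (Real.exp_pos _).trans_le (hcard i)
  choose Φ hΦ using fun ω : ∀ i, E i => hshadow fun i => (ω i : X)
  obtain ⟨ι, hι, hιn⟩ := exists_blockStart_le_lt hpos
  obtain ⟨n₀, hn₀⟩ := eventually_atTop.1
    (hι.eventually (eventually_mul_blockStart_succ_le hs hsh hpos hgap hslow))
  refine ⟨n₀, one_le_bowenH_of_pi (fun ω => isGeneric_of_shadow hg hpos hgap hslow hρ (hΦ ω)
    (hE _ fun i => (ω i).2)) fun n hn => ⟨ι n, fun ω ω' hmem i hi => ?_, ?_⟩⟩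
  · by_contra hωi
    have hend : blockStart (a + b) i + (a i + b i) ≤ n :=
      calc _ = blockStart (a + b) (i + 1) := (blockStart_succ _ _).symm
        _ ≤ n := (monotone_blockStart _ hi).trans (hιn n).1
    refine hsep i (ω i).2 (ω' i).2 (fun h => hωi (Subtype.ext h.symm)) fun j hj => ?_
    linarith [mem_bowenBall_of_shadow hmem hend (hΦ ω i) (hΦ ω' i) j hj, hρε i]
  · calc Real.exp (s * n) ≤ Real.exp (∑ i ∈ Finset.range (ι n), b i * h) := by
          refine Real.exp_le_exp.2 (le_trans ?_ (hn₀ n hn))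
          gcongr
          exact (hιn n).2.le
      _ = ∏ i ∈ Finset.range (ι n), Real.exp (b i * h) := Real.exp_sum _ _
      _ ≤ ∏ i ∈ Finset.range (ι n), (Fintype.card (E i) : ℝ) := by
          simp only [Fintype.card_coe]
          gcongr with i
          exact hcard i

theorem HasSeparatedApproximation.exists_one_le_bowenH (hT : Continuous T)
    (hspec : SpecificationProperty T) (hε : 0 < ε) (hμ : HasSeparatedApproximation T μ h ε)
    (hs : 0 ≤ s) (hsh : s < h) : ∃ n₀, 1 ≤ bowenH T {x | IsGeneric T μ x} s (ε / 4) n₀ := by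
  classical
  have hg := TopologicalSpace.denseRange_denseSeq C(X, ℝ)
  obtain ⟨r, hr, hr_mem, hr0⟩ := exists_seq_strictAnti_tendsto' (show 0 < ε / 4 by positivity)
  choose M _ hM using fun k : ℕ => hspec _ (sub_pos.2 (hr k.lt_succ_self))
  choose L hLM E hsep hcard hE using fun k : ℕ =>
    hμ ((Finset.range k).image (TopologicalSpace.denseSeq C(X, ℝ))) (1 / (k + 1))
      (by positivity) (k * M k + 1)
  have hpos : ∀ k, 0 < (M + L) k := fun k => by
    have := hLM k
    simp only [Pi.add_apply]
    omega
  obtain ⟨κ, hκ, hκt, hslow⟩ := exists_slow_reparametrization hpos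
  refine exists_one_le_bowenH_isGeneric_of_blocks hs hsh hg (a := M ∘ κ) (b := L ∘ κ)
    (ρ := r ∘ κ) (fun i => hpos _) ?_ hslow ?_ (fun i => (hr_mem _).2.le)
    (fun e => exists_shadow hT (fun k => (hr_mem k).1.le) hM hκ hκt e) (fun i => hsep _)
    (fun i => hcard _) fun e he l => Asymptotics.isLittleO_iff.2 fun c hc => ?_
  · refine isLittleO_natCast_of_mul_le hκt fun i => ?_
    have := hLM (κ i)
    simp only [Function.comp_apply, Pi.add_apply]
    omega
  · exact tendsto_nhdsWithin_iff.2 ⟨hr0.comp hκt, .of_forall fun i => (hr_mem _).1⟩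
  · filter_upwards [hκt.eventually_gt_atTop l, (tendsto_one_div_add_atTop_nhds_zero_nat.comp
      hκt).eventually_lt_const hc] with i hli hic
    have hsum := hE (κ i) (e i) (he i) _ (Finset.mem_image_of_mem _ (Finset.mem_range.2 hli))
    rw [Real.norm_natCast, mul_comm c]
    exact hsum.trans (mul_le_mul_of_nonneg_left hic.le (Nat.cast_nonneg _))

theorem ksEntropy_le_bowenEntropy_isGeneric (hT : Continuous T) (hspec : SpecificationProperty T)
    (hμ : MeasurePreserving T μ μ) :
    ksEntropy T μ ≤ bowenEntropy T {x | IsGeneric T μ x} := by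
  refine ENNReal.le_of_forall_nnreal_lt fun h hh => ?_
  obtain ⟨ε, hε, happrox⟩ := exists_hasSeparatedApproximation_of_lt_ksEntropy hspec hμ hh
  have hle : (h : ℝ≥0∞) ≤ bowenEntropyRes T {x | IsGeneric T μ x} (ε / 4) :=
    le_bowenEntropyRes fun s hs => by
      obtain ⟨n, hn⟩ := happrox.exists_one_le_bowenH hT hspec hε s.2 (ENNReal.coe_lt_coe.1 hs)
      exact ⟨n, (zero_lt_one.trans_le hn).ne'⟩
  exact le_iSup₂_of_le (ε / 4) (show 0 < ε / 4 by positivity) hle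

end LowerBound

theorem specification_implies_saturated_general [PseudoMetricSpace X] [CompactSpace X]
    [MeasurableSpace X] [BorelSpace X] {T : X → X} (hT : Continuous T)
    (hspec : SpecificationProperty T) : Saturated T := fun _ _ hμ =>
  le_antisymm (bowenEntropy_isGeneric_le_ksEntropy hT hμ)
    (ksEntropy_le_bowenEntropy_isGeneric hT hspec hμ)

/-- **Theorem (Fan–Liao–Peyrière).** If a dynamical system `(X,T)` on a compact metric
space satisfies the specification property, then it is saturated: for every `T`-invariant
Borel probability measure `μ`, the Bowen topological entropy of the set of `μ`-generic
points equals the measure-theoretic entropy of `μ`. -/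
theorem specification_implies_saturated {X : Type*} [MetricSpace X] [CompactSpace X]
    [MeasurableSpace X] [BorelSpace X] (T : X → X) (hT : Continuous T)
    (hspec : SpecificationProperty T) : Saturated T := by
  exact specification_implies_saturated_general hT hspec
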